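/- arXiv:2507.01566 — 2 statements merged into one kernel-verified Lean document; each statement's English description precedes it below -/
import Mathlib

section
/- For a compact set E ⊆ ℝ² with nonempty interior define the first Dirichlet Laplacian eigenvalue λ₁(E) = inf { ∫_{ℝ²} ‖∇u(x)‖² dx : u ∈ C_c^∞(ℝ²), supp u ⊆ interior(E), ∫_{ℝ²} u(x)² dx = 1 }. Then, for any regular hexagon H* with |H*| = 1, λ₁(H*) ≤ λ₁(H) for every H ∈ 𝓗 with |H| = 1; that is, among convex polygons of unit area that tile the plane by translations, the regular hexagon minimizes the first Dirichlet Laplacian eigenvalue. -/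
open MeasureTheory Metric Filter Real Set
open scoped Topology ENNReal NNReal RealInnerProductSpace

noncomputable section

/-- The Euclidean plane. -/
abbrev E2 : Type := EuclideanSpace ℝ (Fin 2)

/-- The line through `x` with direction `v`. -/
def lineThrough (x v : E2) : Set E2 := {y : E2 | ∃ t : ℝ, y = x + t • v}

/-- Steiner symmetrization of `A` with respect to the affine line `{x | ⟪x, v⟫ = c}`,
where `v` is a unit normal vector of the line. -/
def steiner (v : E2) (c : ℝ) (A : Set E2) : Set E2 :=
  {y : E2 | ∃ x : E2, ⟪x, v⟫ = c ∧ (A ∩ lineThrough x v).Nonempty ∧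
    ∃ r : ℝ, y = x + r • v ∧
      ENNReal.ofReal (2 * |r|) ≤ μH[1] (A ∩ lineThrough x v)}

/-- The class `𝓗` of centrally symmetric convex hexagons (possibly degenerated to
parallelograms), i.e. the convex polygons tiling the plane by translations. -/
def Hex (H : Set E2) : Prop :=
  (∃ x₀ p q r : E2, H = (fun y => x₀ + y) '' convexHull ℝ ({p, q, r, -p, -q, -r} : Set E2)) ∧
  (interior H).Nonempty

/-- The `k`-th vertex of the standard regular hexagon. -/
def hexVertex (k : ℕ) : E2 :=
  (WithLp.equiv 2 (Fin 2 → ℝ)).symm ![Real.cos (k * π / 3), Real.sin (k * π / 3)]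

/-- The standard regular hexagon, with vertices `(cos (kπ/3), sin (kπ/3))`, `k = 0, …, 5`. -/
def stdHexagon : Set E2 := convexHull ℝ (Set.range fun k : Fin 6 => hexVertex k)

/-- A similarity of the plane (composition of a rotation, a dilation and a translation,
possibly with a reflection). -/
def IsSimilarity (f : E2 → E2) : Prop :=
  ∃ s : ℝ, 0 < s ∧ ∀ x y, dist (f x) (f y) = s * dist x y

/-- A regular hexagon is any image of the standard one under a similarity. -/
def IsRegularHexagon (H : Set E2) : Prop := ∃ f : E2 → E2, IsSimilarity f ∧ H = f '' stdHexagon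

/-- Convergence of a sequence of sets in the Hausdorff distance. -/
def HausdorffTendsto (Hn : ℕ → Set E2) (H : Set E2) : Prop :=
  Tendsto (fun n => EMetric.hausdorffEdist (Hn n) H) atTop (𝓝 0)

/-- The planar cross product (determinant) of two vectors. -/
def det2 (u w : E2) : ℝ := u 0 * w 1 - u 1 * w 0

/-- `A, B, C, D, E, F` are (consecutive) vertices of the centrally symmetric hexagon `H`:
`H` is their convex hull, `D, E, F` are the antipodes of `A, B, C` with respect to a center
`o`, and `H` has nonempty interior. -/
def HexWithVertices (A B C D E F : E2) (H : Set E2) : Prop :=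
  H = convexHull ℝ ({A, B, C, D, E, F} : Set E2) ∧
  (∃ o : E2, D = (2:ℝ) • o - A ∧ E = (2:ℝ) • o - B ∧ F = (2:ℝ) • o - C) ∧
  (interior H).Nonempty

/-- The vertices `A, B, C, D, E, F` are listed in counterclockwise order. -/
def CCWList (A B C D E F : E2) : Prop :=
  0 ≤ det2 (B - A) (C - B) ∧ 0 ≤ det2 (C - B) (D - C) ∧ 0 ≤ det2 (D - C) (E - D) ∧
  0 ≤ det2 (E - D) (F - E) ∧ 0 ≤ det2 (F - E) (A - F) ∧ 0 ≤ det2 (A - F) (B - A)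

/-- The six vertices are distinct and no three of them are collinear. -/
def NondegenerateHex (A B C D E F : E2) : Prop :=
  [A, B, C, D, E, F].Pairwise (· ≠ ·) ∧
  ∀ P Q R : E2, P ∈ ({A, B, C, D, E, F} : Set E2) → Q ∈ ({A, B, C, D, E, F} : Set E2) →
    R ∈ ({A, B, C, D, E, F} : Set E2) → P ≠ Q → P ≠ R → Q ≠ R →
      ¬ Collinear ℝ ({P, Q, R} : Set E2)

/-- The first Dirichlet Laplacian eigenvalue of a compact set `E ⊆ ℝ²` with nonempty
interior, defined by the Rayleigh quotient over smooth compactly supported functions with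
support in the interior of `E`. -/
def dirichletEigenvalue (E : Set E2) : ℝ :=
  sInf {t : ℝ | ∃ u : E2 → ℝ, ContDiff ℝ (⊤ : ℕ∞) u ∧ HasCompactSupport u ∧
    tsupport u ⊆ interior E ∧ (∫ x : E2, u x ^ 2) = 1 ∧
    t = ∫ x : E2, ‖fderiv ℝ u x‖ ^ 2}

/-- The distribution function of `|f|`. -/
def distrib (f : ℝ → ℝ) (t : ℝ) : ℝ≥0∞ := volume {x | t < |f x|}

/-- The symmetric decreasing rearrangement of `|f|` on the line. -/
def rearr (f : ℝ → ℝ) (x : ℝ) : ℝ :=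
  sSup {t | 0 ≤ t ∧ ENNReal.ofReal (2 * |x|) < distrib f t}

lemma distrib_antitone (f : ℝ → ℝ) : Antitone (distrib f) := by
  intro s t hst
  exact measure_mono fun x hx => lt_of_le_of_lt hst hx

lemma exists_gt_lt_distrib {f : ℝ → ℝ} {t : ℝ} {m : ℝ≥0∞} (h : m < distrib f t) :
    ∃ s, t < s ∧ m < distrib f s := by
  have hU : {x | t < |f x|} = ⋃ n : ℕ, {x | t + 1 / ((n : ℝ) + 1) < |f x|} := by
    ext x
    simp only [mem_ofPred_eq, mem_iUnion]
    constructor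
    · intro hx
      obtain ⟨n, hn⟩ := exists_nat_one_div_lt (sub_pos.2 hx)
      exact ⟨n, by linarith⟩
    · rintro ⟨n, hn⟩
      have : (0 : ℝ) < 1 / ((n : ℝ) + 1) := by positivity
      linarith
  have hmono : Monotone fun n : ℕ => {x | t + 1 / ((n : ℝ) + 1) < |f x|} := by
    intro a b hab x hx
    have : 1 / ((b : ℝ) + 1) ≤ 1 / ((a : ℝ) + 1) := by
      apply one_div_le_one_div_of_le (by positivity)
      have : (a : ℝ) ≤ b := by exact_mod_cast hab
      linarith
    simp only [mem_ofPred_eq] at hx ⊢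
    linarith
  rw [distrib, hU, hmono.measure_iUnion] at h
  obtain ⟨n, hn⟩ := lt_iSup_iff.1 h
  exact ⟨t + 1 / ((n : ℝ) + 1), by have : (0 : ℝ) < 1 / ((n : ℝ) + 1) := by positivity
                                   linarith, hn⟩

lemma rearr_bddAbove {f : ℝ → ℝ} {M : ℝ} (hM : ∀ x, |f x| ≤ M) (x : ℝ) :
    BddAbove {t | 0 ≤ t ∧ ENNReal.ofReal (2 * |x|) < distrib f t} := by
  refine ⟨M, fun t ht => ?_⟩
  by_contra! hlt
  have : {x | t < |f x|} = ∅ := by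
    ext y
    simp only [mem_ofPred_eq, mem_empty_iff_false, iff_false, not_lt]
    exact (hM y).trans hlt.le
  have h2 := ht.2
  simp [distrib, this] at h2

lemma lt_rearr_iff {f : ℝ → ℝ} {M : ℝ} (hM : ∀ x, |f x| ≤ M) {t : ℝ} (ht : 0 ≤ t) (x : ℝ) :
    t < rearr f x ↔ ENNReal.ofReal (2 * |x|) < distrib f t := by
  constructor
  · intro h
    have hne : {t | 0 ≤ t ∧ ENNReal.ofReal (2 * |x|) < distrib f t}.Nonempty := by
      by_contra hne
      rw [not_nonempty_iff_eq_empty] at hne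
      rw [rearr, hne, Real.sSup_empty] at h
      linarith
    obtain ⟨s, hs, hts⟩ := exists_lt_of_lt_csSup hne h
    exact hs.2.trans_le (distrib_antitone f hts.le)
  · intro h
    obtain ⟨s, hts, hs⟩ := exists_gt_lt_distrib h
    exact hts.trans_le (le_csSup (rearr_bddAbove hM x) ⟨ht.trans hts.le, hs⟩)

lemma rearr_nonneg (f : ℝ → ℝ) (x : ℝ) : 0 ≤ rearr f x :=
  Real.sSup_nonneg fun _ ht => ht.1

lemma rearr_le {f : ℝ → ℝ} {M : ℝ} (hM : ∀ x, |f x| ≤ M) (x : ℝ) : rearr f x ≤ M := by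
  by_contra! h
  have hM0 : 0 ≤ M := (abs_nonneg _).trans (hM 0)
  rw [lt_rearr_iff hM hM0] at h
  have : {x | M < |f x|} = ∅ := by
    ext y
    simpa using hM y
  simp [distrib, this] at h

lemma volume_two_mul_abs_lt (m : ℝ≥0∞) : volume {x : ℝ | ENNReal.ofReal (2 * |x|) < m} = m := by
  induction m using ENNReal.recTopCoe with
  | top => simp [-ENNReal.ofReal_mul]
  | coe m =>
    have : {x : ℝ | ENNReal.ofReal (2 * |x|) < (m : ℝ≥0∞)} = Ioo (-(m / 2 : ℝ)) (m / 2) := by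
      ext x
      rw [mem_ofPred_eq, ← ENNReal.ofReal_coe_nnreal,
        ENNReal.ofReal_lt_ofReal_iff_of_nonneg (by positivity), mem_Ioo, ← abs_lt]
      constructor <;> intro h <;> linarith
    rw [this, Real.volume_Ioo, ← ENNReal.ofReal_coe_nnreal]
    congr 1
    ring

lemma lintegral_mul_eq_lintegral_volume {f g : ℝ → ℝ} (hf : Measurable f) (hg : Measurable g) :
    ∫⁻ x, ENNReal.ofReal (f x) * ENNReal.ofReal (g x) =
      ∫⁻ p : ℝ × ℝ, volume {x | (0 < p.1 ∧ p.1 < f x) ∧ 0 < p.2 ∧ p.2 < g x} := by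
  set W : Set (ℝ × (ℝ × ℝ)) :=
    {z | (0 < z.2.1 ∧ z.2.1 < f z.1) ∧ 0 < z.2.2 ∧ z.2.2 < g z.1} with hW
  have hWm : MeasurableSet W := by
    exact ((measurableSet_lt measurable_const measurable_snd.fst).inter
      (measurableSet_lt measurable_snd.fst (hf.comp measurable_fst))).inter
      ((measurableSet_lt measurable_const measurable_snd.snd).inter
        (measurableSet_lt measurable_snd.snd (hg.comp measurable_fst)))
  have h1 := Measure.prod_apply (μ := (volume : Measure ℝ)) (ν := (volume : Measure (ℝ × ℝ))) hWm
  have h2 := Measure.prod_apply_symm (μ := (volume : Measure ℝ))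
    (ν := (volume : Measure (ℝ × ℝ))) hWm
  rw [h1] at h2
  calc _ = ∫⁻ x, volume (Prod.mk x ⁻¹' W) := by
        refine lintegral_congr fun x => ?_
        have : Prod.mk x ⁻¹' W = Ioo 0 (f x) ×ˢ Ioo 0 (g x) := by
          ext p; simp [hW]
        rw [this, Measure.volume_eq_prod, Measure.prod_prod]
        simp
    _ = _ := h2

lemma volume_rearr_inter {f g : ℝ → ℝ} {M N : ℝ} (hM : ∀ x, |f x| ≤ M) (hN : ∀ x, |g x| ≤ N)
    {s t : ℝ} (hs : 0 < s) (ht : 0 < t) :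
    volume {x | (0 < s ∧ s < rearr f x) ∧ 0 < t ∧ t < rearr g x} =
      min (distrib f s) (distrib g t) := by
  rw [← volume_two_mul_abs_lt (min (distrib f s) (distrib g t))]
  congr 1
  ext x
  simp [hs, ht, lt_rearr_iff hM hs.le, lt_rearr_iff hN ht.le]

lemma measurable_rearr {f : ℝ → ℝ} {M : ℝ} (hM : ∀ x, |f x| ≤ M) : Measurable (rearr f) := by
  refine measurable_of_Ioi fun t => ?_
  rcases lt_or_ge t 0 with ht | ht
  · have : rearr f ⁻¹' Ioi t = univ := by
      ext x; simpa using ht.trans_le (rearr_nonneg f x)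
    rw [this]; exact MeasurableSet.univ
  · have : rearr f ⁻¹' Ioi t = {x | ENNReal.ofReal (2 * |x|) < distrib f t} := by
      ext x; exact lt_rearr_iff hM ht x
    rw [this]
    exact measurableSet_lt (by fun_prop) measurable_const

lemma lintegral_mul_le_rearr {f g : ℝ → ℝ} {M N : ℝ} (hM : ∀ x, |f x| ≤ M) (hN : ∀ x, |g x| ≤ N)
    (hf : Measurable f) (hg : Measurable g) :
    ∫⁻ x, ENNReal.ofReal |f x| * ENNReal.ofReal |g x| ≤
      ∫⁻ x, ENNReal.ofReal (rearr f x) * ENNReal.ofReal (rearr g x) := by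
  rw [lintegral_mul_eq_lintegral_volume (f := fun x => |f x|) (g := fun x => |g x|)
    (by fun_prop) (by fun_prop),
    lintegral_mul_eq_lintegral_volume (measurable_rearr hM) (measurable_rearr hN)]
  refine lintegral_mono fun p => ?_
  by_cases hp : 0 < p.1 ∧ 0 < p.2
  · simp only
    rw [volume_rearr_inter hM hN hp.1 hp.2]
    exact le_min (measure_mono fun x hx => hx.1.2) (measure_mono fun x hx => hx.2.2)
  · have : {x | (0 < p.1 ∧ p.1 < |f x|) ∧ 0 < p.2 ∧ p.2 < |g x|} = ∅ := by
      ext x; simp only [mem_ofPred_eq, mem_empty_iff_false, iff_false]; tauto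
    simp [this]

lemma lintegral_rearr_mul_self {f : ℝ → ℝ} {M : ℝ} (hM : ∀ x, |f x| ≤ M) (hf : Measurable f) :
    ∫⁻ x, ENNReal.ofReal (rearr f x) * ENNReal.ofReal (rearr f x) =
      ∫⁻ x, ENNReal.ofReal |f x| * ENNReal.ofReal |f x| := by
  rw [lintegral_mul_eq_lintegral_volume (f := fun x => |f x|) (g := fun x => |f x|)
    (by fun_prop) (by fun_prop),
    lintegral_mul_eq_lintegral_volume (measurable_rearr hM) (measurable_rearr hM)]
  refine lintegral_congr fun p => ?_
  by_cases hp : 0 < p.1 ∧ 0 < p.2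
  · rw [volume_rearr_inter hM hM hp.1 hp.2, ← (distrib_antitone f).map_max, distrib]
    congr 1
    ext x
    simp [hp.1, hp.2]
  · congr 1
    ext x; simp only [mem_ofPred_eq]; tauto

/-- A continuous function passing from below `a` to above `t` does so on an interval on which
its values lie strictly between. -/
lemma exists_crossing {g : ℝ → ℝ} (hg : Continuous g) {x₁ x₂ a t : ℝ} (hx : x₁ ≤ x₂)
    (h1 : g x₁ ≤ a) (h2 : t ≤ g x₂) :
    ∃ l₁ l₂, x₁ ≤ l₁ ∧ l₁ ≤ l₂ ∧ l₂ ≤ x₂ ∧ g l₁ ≤ a ∧ t ≤ g l₂ ∧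
      ∀ x ∈ Ioo l₁ l₂, a < g x ∧ g x < t := by
  have hc1 : IsCompact (Icc x₁ x₂ ∩ g ⁻¹' Iic a) :=
    isCompact_Icc.inter_right (isClosed_Iic.preimage hg)
  obtain ⟨l₁, hl1, hl1'⟩ := hc1.exists_isGreatest ⟨x₁, ⟨le_rfl, hx⟩, h1⟩
  have hc2 : IsCompact (Icc l₁ x₂ ∩ g ⁻¹' Ici t) :=
    isCompact_Icc.inter_right (isClosed_Ici.preimage hg)
  obtain ⟨l₂, hl2, hl2'⟩ := hc2.exists_isLeast ⟨x₂, ⟨hl1.1.2, le_rfl⟩, h2⟩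
  refine ⟨l₁, l₂, hl1.1.1, hl2.1.1, hl2.1.2, hl1.2, hl2.2, fun x hx => ⟨?_, ?_⟩⟩
  · by_contra! h
    have := hl1' ⟨⟨hl1.1.1.trans hx.1.le, hx.2.le.trans hl2.1.2⟩, h⟩
    linarith [hx.1]
  · by_contra! h
    have := hl2' ⟨⟨hx.1.le, hx.2.le.trans hl2.1.2⟩, h⟩
    linarith [hx.2]

/-- On an interval produced by `exists_crossing`, the total variation is at least `t - a`. -/
lemma sub_le_setIntegral_abs_deriv {f : ℝ → ℝ} (hf : ContDiff ℝ 1 f) {a t l₁ l₂ : ℝ}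
    (hl : l₁ ≤ l₂) (h : t - a ≤ |(|f l₂| - |f l₁|)|) :
    t - a ≤ ∫ x in Ioo l₁ l₂, |deriv f x| := by
  have hd : Continuous (deriv f) := hf.continuous_deriv le_rfl
  have hftc : ∫ x in l₁..l₂, deriv f x = f l₂ - f l₁ :=
    intervalIntegral.integral_deriv_eq_sub (fun x _ => hf.differentiable one_ne_zero x)
      (hd.intervalIntegrable _ _)
  have h3 := intervalIntegral.abs_integral_le_integral_abs (f := deriv f) (μ := volume) hl
  rw [hftc, intervalIntegral.integral_of_le hl, integral_Ioc_eq_integral_Ioo] at h3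
  exact h.trans ((abs_abs_sub_abs_le_abs_sub _ _).trans h3)

lemma two_mul_sub_le_setIntegral {f : ℝ → ℝ} (hf : ContDiff ℝ 1 f) (hc : HasCompactSupport f)
    {a t x₀ : ℝ} (ha : 0 ≤ a) (hx₀ : t < |f x₀|) :
    2 * (t - a) ≤ ∫ x in {x | a < |f x| ∧ |f x| ≤ t}, |deriv f x| := by
  have hd : Continuous (deriv f) := hf.continuous_deriv le_rfl
  have hcont : Continuous fun x => |f x| := hf.continuous.abs
  have hintg : Integrable fun x => |deriv f x| :=
    (hd.integrable_of_hasCompactSupport hc.deriv).abs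
  obtain ⟨B, hB⟩ := hc.isCompact.isBounded.subset_closedBall 0
  have hz : ∀ x, |B| < |x| → f x = 0 := by
    intro x hx
    by_contra hne
    have := hB (subset_tsupport f hne)
    rw [mem_closedBall, dist_zero_right, Real.norm_eq_abs] at this
    linarith [le_abs_self B]
  obtain ⟨R, hR⟩ : ∃ R, R = |B| + |x₀| + 1 := ⟨_, rfl⟩
  have hBp := abs_nonneg B
  have hxp := abs_nonneg x₀
  have hRpos : 0 < R := by linarith
  have hzl : f (-R) = 0 := hz _ (by rw [abs_neg, abs_of_pos hRpos]; linarith)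
  have hzr : f R = 0 := hz _ (by rw [abs_of_pos hRpos]; linarith)
  obtain ⟨l₁, l₂, -, hl12, hl2, hgl1, hgl2, hl⟩ := exists_crossing hcont (x₁ := -R) (x₂ := x₀)
    (by linarith [neg_abs_le x₀]) (by simpa [hzl] using ha) hx₀.le
  obtain ⟨r₁, r₂, -, hr12, hr2, hgr1, hgr2, hr⟩ := exists_crossing
    (hcont.comp continuous_neg) (x₁ := -R) (x₂ := -x₀)
    (by linarith [le_abs_self x₀]) (by simpa [hzr] using ha) (by simpa using hx₀.le)
  have i1 := sub_le_setIntegral_abs_deriv hf hl12 (a := a) (t := t)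
    ((by linarith : t - a ≤ |f l₂| - |f l₁|).trans (le_abs_self _))
  have i2 := sub_le_setIntegral_abs_deriv hf (neg_le_neg hr12) (a := a) (t := t) (by
    simp only [Function.comp] at hgr1 hgr2
    exact (by linarith : t - a ≤ -(|f (-r₁)| - |f (-r₂)|)).trans (neg_le_abs _))
  have hdisj : Disjoint (Ioo l₁ l₂) (Ioo (-r₂) (-r₁)) := by
    rw [Set.disjoint_left]
    intro x hx hx'
    linarith [hx.2, hx'.1]
  calc 2 * (t - a) ≤ (∫ x in Ioo l₁ l₂, |deriv f x|) + ∫ x in Ioo (-r₂) (-r₁), |deriv f x| := by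
        linarith
    _ = ∫ x in Ioo l₁ l₂ ∪ Ioo (-r₂) (-r₁), |deriv f x| :=
        (setIntegral_union hdisj measurableSet_Ioo hintg.integrableOn hintg.integrableOn).symm
    _ ≤ _ := by
        refine setIntegral_mono_set hintg.integrableOn
          (Eventually.of_forall fun x => abs_nonneg _) (LE.le.eventuallyLE ?_)
        rintro x (hx | hx)
        · exact ⟨(hl x hx).1, (hl x hx).2.le⟩
        · have := hr (-x) ⟨by linarith [hx.2], by linarith [hx.1]⟩
          simp only [Function.comp, neg_neg] at this
          exact ⟨this.1, this.2.le⟩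

lemma rearr_congr_abs (f : ℝ → ℝ) {x y : ℝ} (h : |x| = |y|) : rearr f x = rearr f y := by
  simp [rearr, h]

lemma rearr_anti {f : ℝ → ℝ} {M : ℝ} (hM : ∀ x, |f x| ≤ M) {x y : ℝ} (h : |x| ≤ |y|) :
    rearr f y ≤ rearr f x := by
  by_contra! hlt
  rw [lt_rearr_iff hM (rearr_nonneg f x)] at hlt
  have : ENNReal.ofReal (2 * |x|) < distrib f (rearr f x) :=
    (ENNReal.ofReal_le_ofReal (by linarith)).trans_lt hlt
  rw [← lt_rearr_iff hM (rearr_nonneg f x)] at this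
  exact lt_irrefl _ this

lemma two_mul_sq_rearr_sub_le {f : ℝ → ℝ} {M : ℝ} (hM : ∀ x, |f x| ≤ M)
    (hf : ContDiff ℝ 1 f) (hc : HasCompactSupport f) {x₁ x₂ : ℝ} (hx : |x₁| ≤ |x₂|) :
    2 * (rearr f x₁ - rearr f x₂) ^ 2 ≤ (|x₂| - |x₁|) *
      ∫ τ in {τ | ENNReal.ofReal (2 * |x₁|) < distrib f |f τ| ∧
        distrib f |f τ| ≤ ENNReal.ofReal (2 * |x₂|)}, deriv f τ ^ 2 := by
  set D := {τ | ENNReal.ofReal (2 * |x₁|) < distrib f |f τ| ∧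
        distrib f |f τ| ≤ ENNReal.ofReal (2 * |x₂|)} with hD
  have hd : Continuous (deriv f) := hf.continuous_deriv le_rfl
  have hint1 : Integrable fun x => |deriv f x| :=
    (hd.integrable_of_hasCompactSupport hc.deriv).abs
  have hint2 : Integrable fun x => deriv f x ^ 2 :=
    (hd.pow 2).integrable_of_hasCompactSupport (by
      have := hc.deriv.comp_left (g := fun x : ℝ => x ^ 2) (by simp)
      exact this)
  obtain ⟨a, ha⟩ : ∃ a, a = rearr f x₂ := ⟨_, rfl⟩
  obtain ⟨b, hb⟩ : ∃ b, b = rearr f x₁ := ⟨_, rfl⟩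
  rw [← ha, ← hb]
  have ha0 : 0 ≤ a := ha ▸ rearr_nonneg f x₂
  have hab : a ≤ b := ha ▸ hb ▸ rearr_anti hM hx
  have hD0 : 0 ≤ ∫ τ in D, deriv f τ ^ 2 := integral_nonneg fun _ => sq_nonneg _
  rcases hab.eq_or_lt with hab | hab
  · rw [hab]
    simpa using mul_nonneg (sub_nonneg.2 hx) hD0
  have hΔ : 0 < |x₂| - |x₁| := by
    rcases hx.eq_or_lt with h | h
    · rw [ha, hb, rearr_congr_abs f h] at hab
      exact absurd hab (lt_irrefl _)
    · linarith
  have key : ∀ t ∈ Ioo a b, 2 * (t - a) ^ 2 ≤ (|x₂| - |x₁|) * ∫ τ in D, deriv f τ ^ 2 := by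
    rintro t ⟨hat, htb⟩
    have ht0 : 0 ≤ t := ha0.trans hat.le
    set S := {x | a < |f x| ∧ |f x| ≤ t} with hS
    have hSm : MeasurableSet S :=
      (measurableSet_lt measurable_const hf.continuous.measurable.norm).inter
        (measurableSet_le hf.continuous.measurable.norm measurable_const)
    have h1 : ENNReal.ofReal (2 * |x₁|) < distrib f t := by
      rwa [← lt_rearr_iff hM ht0, ← hb]
    have h2 : distrib f a ≤ ENNReal.ofReal (2 * |x₂|) := by
      rw [← not_lt, ← lt_rearr_iff hM ha0, ← ha]
      exact lt_irrefl _
    obtain ⟨x₀, hx₀⟩ : {x | t < |f x|}.Nonempty := by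
      apply nonempty_of_measure_ne_zero (μ := volume)
      exact (lt_of_le_of_lt zero_le h1).ne'
    have hvar := two_mul_sub_le_setIntegral hf hc ha0 hx₀
    have hvol : volume S + distrib f t = distrib f a := by
      rw [distrib, distrib, ← measure_union]
      · congr 1
        ext x
        simp only [hS, mem_union, mem_ofPred_eq]
        constructor
        · rintro (h | h)
          · exact h.1
          · exact hat.trans h
        · intro h
          rcases le_or_gt |f x| t with h' | h'
          · exact Or.inl ⟨h, h'⟩
          · exact Or.inr h'
      · rw [Set.disjoint_left]
        intro x hx hx'
        exact absurd hx.2 (not_le.2 hx')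
      · exact measurableSet_lt measurable_const hf.continuous.measurable.norm
    have hSfin : volume S ≠ ⊤ := by
      intro h
      rw [h, top_add] at hvol
      rw [← hvol] at h2
      exact ENNReal.ofReal_ne_top (top_le_iff.1 h2)
    have hSle : (volume S).toReal ≤ 2 * (|x₂| - |x₁|) := by
      have h3 : volume S + ENNReal.ofReal (2 * |x₁|) ≤ ENNReal.ofReal (2 * |x₂|) :=
        (add_le_add le_rfl h1.le).trans (hvol ▸ h2)
      rw [← ENNReal.ofReal_toReal hSfin, ← ENNReal.ofReal_add ENNReal.toReal_nonneg
        (by positivity), ENNReal.ofReal_le_ofReal_iff (by positivity)] at h3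
      linarith
    have hSD : S ⊆ D := by
      intro τ hτ
      constructor
      · rw [← lt_rearr_iff hM (abs_nonneg _), ← hb]
        exact hτ.2.trans_lt htb
      · rw [← not_lt, ← lt_rearr_iff hM (abs_nonneg _), ← ha, not_lt]
        exact hτ.1.le
    obtain ⟨c, hcdef⟩ : ∃ c, c = (t - a) / (|x₂| - |x₁|) := ⟨_, rfl⟩
    have hc0 : 0 ≤ c := hcdef ▸ div_nonneg (by linarith) hΔ.le
    have hcm : c * (|x₂| - |x₁|) = t - a := by rw [hcdef]; field_simp
    have hquad : 2 * c * (∫ x in S, |deriv f x|) - c ^ 2 * (volume S).toReal ≤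
        ∫ x in S, deriv f x ^ 2 := by
      have hconst : IntegrableOn (fun _ : ℝ => c ^ 2) S := integrableOn_const hSfin
      have : 2 * c * (∫ x in S, |deriv f x|) - c ^ 2 * (volume S).toReal =
          ∫ x in S, (2 * c * |deriv f x| - c ^ 2) := by
        rw [integral_sub (hint1.integrableOn.const_mul _) hconst, integral_const_mul,
          setIntegral_const, smul_eq_mul, Measure.real]
        ring
      rw [this]
      refine setIntegral_mono ((hint1.integrableOn.const_mul _).sub hconst)
        hint2.integrableOn fun x => ?_
      simp only
      nlinarith [sq_nonneg (|deriv f x| - c), sq_abs (deriv f x)]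
    have hmono : ∫ x in S, deriv f x ^ 2 ≤ ∫ x in D, deriv f x ^ 2 :=
      setIntegral_mono_set hint2.integrableOn (Eventually.of_forall fun x => sq_nonneg _)
        hSD.eventuallyLE
    have h5 : 2 * c * (2 * (t - a)) - c ^ 2 * (2 * (|x₂| - |x₁|)) ≤ ∫ x in D, deriv f x ^ 2 := by
      have e1 := mul_le_mul_of_nonneg_left hvar (by positivity : 0 ≤ 2 * c)
      have e2 := mul_le_mul_of_nonneg_left hSle (by positivity : 0 ≤ c ^ 2)
      linarith
    have h6 := mul_le_mul_of_nonneg_left h5 hΔ.le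
    have e : (|x₂| - |x₁|) * (2 * c * (2 * (t - a)) - c ^ 2 * (2 * (|x₂| - |x₁|))) =
        2 * (t - a) ^ 2 := by
      rw [← hcm]; ring
    linarith
  have htend : Tendsto (fun t => 2 * (t - a) ^ 2) (𝓝[<] b) (𝓝 (2 * (b - a) ^ 2)) := by
    apply Continuous.tendsto' (by fun_prop) _ _ rfl |>.mono_left nhdsWithin_le_nhds
  exact le_of_tendsto htend (by
    filter_upwards [Ioo_mem_nhdsLT hab] with t ht using key t ht)

lemma measurable_distrib_comp {f : ℝ → ℝ} (hf : Measurable f) :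
    Measurable fun τ => distrib f |f τ| :=
  (distrib_antitone f).measurable.comp hf.norm

lemma volume_shell_le (m : ℝ≥0∞) {h : ℝ} (hh : 0 < h) :
    volume {x : ℝ | ENNReal.ofReal (2 * |(|x| - h / 2)|) < m ∧
      m ≤ ENNReal.ofReal (2 * |(|x| + h / 2)|)} ≤ ENNReal.ofReal (2 * h) := by
  induction m using ENNReal.recTopCoe with
  | top => simp [-ENNReal.ofReal_mul]
  | coe m =>
    have hsub : {x : ℝ | ENNReal.ofReal (2 * |(|x| - h / 2)|) < (m : ℝ≥0∞) ∧
      (m : ℝ≥0∞) ≤ ENNReal.ofReal (2 * |(|x| + h / 2)|)} ⊆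
        Icc ((m : ℝ) / 2 - h / 2) ((m : ℝ) / 2 + h / 2) ∪
        Icc (-((m : ℝ) / 2 + h / 2)) (-((m : ℝ) / 2 - h / 2)) := by
      rintro x ⟨h1, h2⟩
      rw [← ENNReal.ofReal_coe_nnreal, ENNReal.ofReal_lt_ofReal_iff_of_nonneg (by positivity)]
        at h1
      rw [← ENNReal.ofReal_coe_nnreal, ENNReal.ofReal_le_ofReal_iff (by positivity),
        abs_of_nonneg (by positivity)] at h2
      have h3 := (abs_lt.1 (by linarith : |(|x| - h / 2)| < m / 2)).2
      rcases abs_cases x with ⟨hx, -⟩ | ⟨hx, -⟩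
      · left; constructor <;> linarith
      · right; constructor <;> linarith
    refine (measure_mono hsub).trans ((measure_union_le _ _).trans ?_)
    rw [Real.volume_Icc, Real.volume_Icc, ← ENNReal.ofReal_add (by linarith) (by linarith)]
    apply ENNReal.ofReal_le_ofReal
    linarith

/-- The rearrangement does not increase the Dirichlet energy on the line, in terms of
difference quotients. -/
lemma lintegral_rearr_shift_le {f : ℝ → ℝ} {M : ℝ} (hM : ∀ x, |f x| ≤ M)
    (hf : ContDiff ℝ 1 f) (hc : HasCompactSupport f) {h : ℝ} (hh : 0 < h) :
    ∫⁻ x, ENNReal.ofReal ((rearr f (x + h) - rearr f x) ^ 2) ≤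
      ENNReal.ofReal (h ^ 2) * ∫⁻ x, ENNReal.ofReal (deriv f x ^ 2) := by
  have hd : Continuous (deriv f) := hf.continuous_deriv le_rfl
  have hmd := measurable_distrib_comp hf.continuous.measurable
  have hint2 : Integrable fun x => deriv f x ^ 2 :=
    (hd.pow 2).integrable_of_hasCompactSupport (by
      have := hc.deriv.comp_left (g := fun x : ℝ => x ^ 2) (by simp)
      exact this)
  set W : ℝ → ℝ → Prop := fun x τ => ENNReal.ofReal (2 * |(|x| - h / 2)|) < distrib f |f τ| ∧
        distrib f |f τ| ≤ ENNReal.ofReal (2 * |(|x| + h / 2)|) with hW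
  have hWm : MeasurableSet {z : ℝ × ℝ | W z.1 z.2} :=
    (measurableSet_lt (by fun_prop) (hmd.comp measurable_snd)).inter
      (measurableSet_le (hmd.comp measurable_snd) (by fun_prop))
  have hpt : ∀ x, ENNReal.ofReal ((rearr f (x + h / 2) - rearr f (x - h / 2)) ^ 2) ≤
      ENNReal.ofReal (h / 2) *
        ∫⁻ τ, {τ | W x τ}.indicator (fun τ => ENNReal.ofReal (deriv f τ ^ 2)) τ := by
    intro x
    have hle : |(|x| - h / 2)| ≤ |(|x| + h / 2)| := by
      rw [abs_of_nonneg (by positivity : 0 ≤ |x| + h / 2), abs_le]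
      constructor <;> linarith [abs_nonneg x]
    have h1 := two_mul_sq_rearr_sub_le hM hf hc hle
    have hsq : (rearr f (x + h / 2) - rearr f (x - h / 2)) ^ 2 =
        (rearr f (|x| - h / 2) - rearr f (|x| + h / 2)) ^ 2 := by
      rcases abs_cases x with ⟨hx, -⟩ | ⟨hx, -⟩
      · rw [hx]; ring
      · rw [hx, rearr_congr_abs f (x := -x - h / 2) (y := x + h / 2)
          (by rw [← abs_neg]; congr 1; ring),
          rearr_congr_abs f (x := -x + h / 2) (y := x - h / 2)
          (by rw [← abs_neg]; congr 1; ring)]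
    have hgap : |(|x| + h / 2)| - |(|x| - h / 2)| ≤ h := by
      rw [abs_of_nonneg (by positivity : 0 ≤ |x| + h / 2)]
      linarith [le_abs_self (|x| - h / 2)]
    have hWx : MeasurableSet {τ | W x τ} := measurable_prodMk_left hWm
    have hI0 : 0 ≤ ∫ τ in {τ | W x τ}, deriv f τ ^ 2 := integral_nonneg fun _ => sq_nonneg _
    rw [lintegral_indicator hWx, ← ofReal_integral_eq_lintegral_ofReal hint2.integrableOn
      (Eventually.of_forall fun _ => sq_nonneg _), ← ENNReal.ofReal_mul (by positivity), hsq]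
    apply ENNReal.ofReal_le_ofReal
    have := mul_le_mul_of_nonneg_right hgap hI0
    linarith
  calc ∫⁻ x, ENNReal.ofReal ((rearr f (x + h) - rearr f x) ^ 2)
      = ∫⁻ x, ENNReal.ofReal ((rearr f (x + h / 2) - rearr f (x - h / 2)) ^ 2) := by
        rw [← lintegral_sub_right_eq_self _ (h / 2)]
        refine lintegral_congr fun x => ?_
        rw [show x - h / 2 + h = x + h / 2 by ring]
    _ ≤ ∫⁻ x, ENNReal.ofReal (h / 2) *
        ∫⁻ τ, {τ | W x τ}.indicator (fun τ => ENNReal.ofReal (deriv f τ ^ 2)) τ :=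
        lintegral_mono hpt
    _ = ENNReal.ofReal (h / 2) * ∫⁻ x,
        ∫⁻ τ, {z : ℝ × ℝ | W z.1 z.2}.indicator
          (fun z => ENNReal.ofReal (deriv f z.2 ^ 2)) (x, τ) := by
        rw [lintegral_const_mul' _ _ ENNReal.ofReal_ne_top]
        rfl
    _ = ENNReal.ofReal (h / 2) * ∫⁻ τ, ENNReal.ofReal (deriv f τ ^ 2) * volume {x | W x τ} := by
        rw [lintegral_lintegral_swap]
        · congr 1
          refine lintegral_congr fun τ => ?_
          have hWτ : MeasurableSet {x | W x τ} := measurable_prodMk_right hWm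
          rw [← lintegral_indicator_const hWτ]
          rfl
        · refine (Measurable.indicator ?_ hWm).aemeasurable
          exact ((hd.measurable.comp measurable_snd).pow_const 2).ennreal_ofReal
    _ ≤ ENNReal.ofReal (h / 2) * ∫⁻ τ, ENNReal.ofReal (deriv f τ ^ 2) * ENNReal.ofReal (2 * h) := by
        gcongr with τ
        exact volume_shell_le _ hh
    _ = _ := by
        rw [lintegral_mul_const' _ _ ENNReal.ofReal_ne_top, mul_comm (∫⁻ _, _), ← mul_assoc,
          ← ENNReal.ofReal_mul (by positivity)]
        congr 2
        ring

/-- The rearrangement is nonexpansive in `L²`. -/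
lemma lintegral_rearr_sub_le {f g : ℝ → ℝ} {M N : ℝ} (hM : ∀ x, |f x| ≤ M) (hN : ∀ x, |g x| ≤ N)
    (hf : Measurable f) (hg : Measurable g)
    (hf2 : ∫⁻ x, ENNReal.ofReal |f x| * ENNReal.ofReal |f x| ≠ ∞)
    (hg2 : ∫⁻ x, ENNReal.ofReal |g x| * ENNReal.ofReal |g x| ≠ ∞) :
    ∫⁻ x, ENNReal.ofReal ((rearr f x - rearr g x) ^ 2) ≤
      ∫⁻ x, ENNReal.ofReal ((f x - g x) ^ 2) := by
  have hrf := measurable_rearr hM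
  have hrg := measurable_rearr hN
  have expand : ∀ {F G : ℝ → ℝ}, Measurable F → Measurable G → (∀ x, 0 ≤ F x) → (∀ x, 0 ≤ G x) →
      (∫⁻ x, ENNReal.ofReal ((F x - G x) ^ 2)) +
        2 * ∫⁻ x, ENNReal.ofReal (F x) * ENNReal.ofReal (G x) =
      (∫⁻ x, ENNReal.ofReal (F x) * ENNReal.ofReal (F x)) +
        ∫⁻ x, ENNReal.ofReal (G x) * ENNReal.ofReal (G x) := by
    intro F G hF hG hF0 hG0
    rw [← lintegral_const_mul _ (by fun_prop), ← lintegral_add_left (by fun_prop),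
      ← lintegral_add_left (by fun_prop)]
    refine lintegral_congr fun x => ?_
    rw [← ENNReal.ofReal_mul (hF0 x), ← ENNReal.ofReal_mul (hF0 x), ← ENNReal.ofReal_mul (hG0 x),
      ← ENNReal.ofReal_ofNat 2, ← ENNReal.ofReal_mul (by norm_num),
      ← ENNReal.ofReal_add (sq_nonneg _) (by have := mul_nonneg (hF0 x) (hG0 x); positivity),
      ← ENNReal.ofReal_add (mul_self_nonneg _) (mul_self_nonneg _)]
    congr 1
    ring
  have e1 := expand hrf hrg (rearr_nonneg f) (rearr_nonneg g)
  have e2 := expand (F := fun x => |f x|) (G := fun x => |g x|) (by fun_prop) (by fun_prop)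
    (fun _ => abs_nonneg _) (fun _ => abs_nonneg _)
  rw [lintegral_rearr_mul_self hM hf, lintegral_rearr_mul_self hN hg, ← e2] at e1
  have hfin : 2 * ∫⁻ x, ENNReal.ofReal (rearr f x) * ENNReal.ofReal (rearr g x) ≠ ∞ := by
    intro h
    rw [h, add_top, e2] at e1
    exact ENNReal.add_ne_top.2 ⟨hf2, hg2⟩ e1.symm
  have hle : ∫⁻ x, ENNReal.ofReal ((|f x| - |g x|) ^ 2) ≤
      ∫⁻ x, ENNReal.ofReal ((f x - g x) ^ 2) := by
    refine lintegral_mono fun x => ENNReal.ofReal_le_ofReal ?_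
    exact sq_le_sq.2 (abs_abs_sub_abs_le_abs_sub _ _)
  refine (ENNReal.add_le_add_iff_right hfin).1 ?_
  rw [e1]
  exact add_le_add hle (mul_le_mul_right (lintegral_mul_le_rearr hM hN hf hg) _)

/-- The variance inequality for a probability density. -/
lemma sq_integral_mul_le {α : Type*} [MeasurableSpace α] {μ : Measure α} {ψ G : α → ℝ}
    (h0 : ∀ x, 0 ≤ ψ x) (h1 : ∫ x, ψ x ∂μ = 1) (hi : Integrable ψ μ)
    (hiG : Integrable (fun x => ψ x * G x) μ) (hiG2 : Integrable (fun x => ψ x * G x ^ 2) μ) :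
    (∫ x, ψ x * G x ∂μ) ^ 2 ≤ ∫ x, ψ x * G x ^ 2 ∂μ := by
  set m := ∫ x, ψ x * G x ∂μ with hm
  have h2 : 0 ≤ ∫ x, ψ x * (G x - m) ^ 2 ∂μ :=
    integral_nonneg fun x => mul_nonneg (h0 x) (sq_nonneg _)
  have h3 : ∫ x, ψ x * (G x - m) ^ 2 ∂μ = (∫ x, ψ x * G x ^ 2 ∂μ) - 2 * m * m + m ^ 2 := by
    calc ∫ x, ψ x * (G x - m) ^ 2 ∂μ
        = ∫ x, (ψ x * G x ^ 2 - 2 * m * (ψ x * G x)) + m ^ 2 * ψ x ∂μ := by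
          congr 1; ext x; ring
      _ = _ := by
          have hsub : Integrable (fun x => ψ x * G x ^ 2 - 2 * m * (ψ x * G x)) μ :=
            hiG2.sub (hiG.const_mul _)
          rw [integral_add hsub (hi.const_mul _), integral_sub hiG2 (hiG.const_mul _), integral_const_mul, integral_const_mul, h1, ← hm]
          ring
  nlinarith

lemma lintegral_shift_le_deriv {g : ℝ → ℝ} (hg : ContDiff ℝ 1 g) {h : ℝ} (hh : 0 < h) :
    ∫⁻ y, ENNReal.ofReal ((g (y + h) - g y) ^ 2) ≤
      ENNReal.ofReal (h ^ 2) * ∫⁻ y, ENNReal.ofReal (deriv g y ^ 2) := by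
  have hd : Continuous (deriv g) := hg.continuous_deriv le_rfl
  have hpt : ∀ y, ENNReal.ofReal ((g (y + h) - g y) ^ 2) ≤
      ENNReal.ofReal h * ∫⁻ s in Ioc 0 h, ENNReal.ofReal (deriv g (y + s) ^ 2) := by
    intro y
    have hc : Continuous fun s => deriv g (y + s) := by fun_prop
    have hftc : ∫ s in (0 : ℝ)..h, deriv g (y + s) = g (y + h) - g y := by
      rw [intervalIntegral.integral_comp_add_left (fun s => deriv g s),
        intervalIntegral.integral_deriv_eq_sub (fun x _ => hg.differentiable one_ne_zero x)
          (hd.intervalIntegrable _ _), add_zero]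
    have hI : ∀ {F : ℝ → ℝ}, Continuous F → IntegrableOn F (Ioc 0 h) := fun hF =>
      (hF.integrableOn_Icc).mono_set Ioc_subset_Icc_self
    have hj := sq_integral_mul_le (μ := volume.restrict (Ioc 0 h)) (ψ := fun _ => h⁻¹)
      (G := fun s => deriv g (y + s)) (fun _ => by positivity)
      (by rw [setIntegral_const]; simp [hh.le]; field_simp) (hI continuous_const)
      (hI (by fun_prop)) (hI (by fun_prop))
    rw [integral_const_mul, integral_const_mul, ← intervalIntegral.integral_of_le hh.le, hftc] at hj
    rw [← ofReal_integral_eq_lintegral_ofReal (hI (by fun_prop))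
      (Eventually.of_forall fun _ => sq_nonneg _), ← ENNReal.ofReal_mul hh.le]
    apply ENNReal.ofReal_le_ofReal
    have h2 : 0 ≤ h ^ 2 := by positivity
    have h4 := mul_le_mul_of_nonneg_left hj h2
    rw [mul_pow, ← mul_assoc, ← mul_assoc] at h4
    have h5 : h ^ 2 * h⁻¹ ^ 2 = 1 := by field_simp
    have h6 : h ^ 2 * h⁻¹ = h := by field_simp
    rwa [h5, h6, one_mul] at h4
  calc _ ≤ ∫⁻ y, ENNReal.ofReal h * ∫⁻ s in Ioc 0 h, ENNReal.ofReal (deriv g (y + s) ^ 2) :=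
        lintegral_mono hpt
    _ = ENNReal.ofReal h * ∫⁻ s in Ioc 0 h, ∫⁻ y, ENNReal.ofReal (deriv g (y + s) ^ 2) := by
        rw [lintegral_const_mul' _ _ ENNReal.ofReal_ne_top, lintegral_lintegral_swap]
        exact (Continuous.measurable (by fun_prop)).ennreal_ofReal.aemeasurable
    _ = _ := by
        simp_rw [lintegral_add_right_eq_self (fun y => ENNReal.ofReal (deriv g y ^ 2))]
        rw [setLIntegral_const, Real.volume_Ioc, sub_zero, mul_comm (∫⁻ _, _), ← mul_assoc,
          ← ENNReal.ofReal_mul hh.le, sq]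

/-- Steiner symmetrization of a function on the plane in the direction of the first axis. -/
def steinerFun (u : ℝ × ℝ → ℝ) (z : ℝ × ℝ) : ℝ := rearr (fun x => u (x, z.2)) z.1

section
variable {u : ℝ × ℝ → ℝ} {M : ℝ}

lemma measurable_steinerFun (hM : ∀ z, |u z| ≤ M) (hu : Measurable u) :
    Measurable (steinerFun u) := by
  refine measurable_of_Ioi fun t => ?_
  rcases lt_or_ge t 0 with ht | ht
  · have : steinerFun u ⁻¹' Ioi t = univ := by
      ext x; simpa [steinerFun] using ht.trans_le (rearr_nonneg _ _)
    rw [this]; exact MeasurableSet.univ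
  · have : steinerFun u ⁻¹' Ioi t =
        {z | ENNReal.ofReal (2 * |z.1|) < distrib (fun x => u (x, z.2)) t} := by
      ext z; exact lt_rearr_iff (fun x => hM (x, z.2)) ht z.1
    rw [this]
    refine measurableSet_lt (by fun_prop) ?_
    have hS : MeasurableSet {z : ℝ × ℝ | t < |u z|} := measurableSet_lt measurable_const hu.norm
    exact (measurable_measure_prodMk_right (μ := (volume : Measure ℝ)) hS).comp measurable_snd

lemma lintegral_sq_steinerFun (hM : ∀ z, |u z| ≤ M) (hu : Measurable u) :
    ∫⁻ z, ENNReal.ofReal (steinerFun u z ^ 2) = ∫⁻ z, ENNReal.ofReal (u z ^ 2) := by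
  have hs := measurable_steinerFun hM hu
  rw [Measure.volume_eq_prod, lintegral_prod_symm' _ (by fun_prop),
    lintegral_prod_symm' _ (by fun_prop)]
  refine lintegral_congr fun y => ?_
  have := lintegral_rearr_mul_self (fun x => hM (x, y)) (hu.comp measurable_prodMk_right)
  convert this using 3 with x x
  · rw [← ENNReal.ofReal_mul (rearr_nonneg _ _), sq]; rfl
  · rw [← ENNReal.ofReal_mul (abs_nonneg _), abs_mul_abs_self, sq]

lemma hasCompactSupport_section (hc : HasCompactSupport u) (y : ℝ) :
    HasCompactSupport fun x => u (x, y) := by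
  refine HasCompactSupport.of_support_subset_isCompact (hc.isCompact.image continuous_fst) ?_
  intro x hx
  exact ⟨(x, y), subset_tsupport u hx, rfl⟩

lemma deriv_comp_left (hu : ContDiff ℝ 1 u) (x y : ℝ) :
    deriv (fun x => u (x, y)) x = fderiv ℝ u (x, y) (1, 0) := by
  have h1 : HasDerivAt (fun x : ℝ => (x, y)) (1, 0) x :=
    (hasDerivAt_id x).prodMk (hasDerivAt_const x y)
  exact ((hu.differentiable one_ne_zero (x, y)).hasFDerivAt.comp_hasDerivAt x h1).deriv

lemma deriv_comp_right (hu : ContDiff ℝ 1 u) (x y : ℝ) :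
    deriv (fun y => u (x, y)) y = fderiv ℝ u (x, y) (0, 1) := by
  have h1 : HasDerivAt (fun y : ℝ => (x, y)) (0, 1) y :=
    (hasDerivAt_const y x).prodMk (hasDerivAt_id y)
  exact ((hu.differentiable one_ne_zero (x, y)).hasFDerivAt.comp_hasDerivAt y h1).deriv

lemma lintegral_steinerFun_shift_fst (hM : ∀ z, |u z| ≤ M) (hu : ContDiff ℝ 1 u)
    (hc : HasCompactSupport u) {h : ℝ} (hh : 0 < h) :
    ∫⁻ z, ENNReal.ofReal ((steinerFun u (z + h • ((1, 0) : ℝ × ℝ)) - steinerFun u z) ^ 2) ≤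
      ENNReal.ofReal (h ^ 2) * ∫⁻ z, ENNReal.ofReal (fderiv ℝ u z (1, 0) ^ 2) := by
  have hs := measurable_steinerFun hM hu.continuous.measurable
  have hd : Continuous fun z => fderiv ℝ u z (1, 0) :=
    (hu.continuous_fderiv one_ne_zero).clm_apply continuous_const
  have hdm := hd.measurable
  rw [Measure.volume_eq_prod, lintegral_prod_symm' _ (by fun_prop),
    lintegral_prod_symm' _ (by fun_prop), ← lintegral_const_mul' _ _ ENNReal.ofReal_ne_top]
  refine lintegral_mono fun y => ?_
  have h1 := lintegral_rearr_shift_le (fun x => hM (x, y))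
    (hu.comp (contDiff_id.prodMk contDiff_const)) (hasCompactSupport_section hc y) hh
  simp_rw [deriv_comp_left hu] at h1
  refine le_trans (le_of_eq ?_) h1
  refine lintegral_congr fun x => ?_
  simp [steinerFun]

lemma lintegral_steinerFun_shift_snd (hM : ∀ z, |u z| ≤ M) (hu : ContDiff ℝ 1 u)
    (hc : HasCompactSupport u) {h : ℝ} (hh : 0 < h) :
    ∫⁻ z, ENNReal.ofReal ((steinerFun u (z + h • ((0, 1) : ℝ × ℝ)) - steinerFun u z) ^ 2) ≤
      ENNReal.ofReal (h ^ 2) * ∫⁻ z, ENNReal.ofReal (fderiv ℝ u z (0, 1) ^ 2) := by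
  have hs := measurable_steinerFun hM hu.continuous.measurable
  have hum := hu.continuous.measurable
  have hd : Continuous fun z => fderiv ℝ u z (0, 1) :=
    (hu.continuous_fderiv one_ne_zero).clm_apply continuous_const
  have hdm := hd.measurable
  have hfin : ∀ y, ∫⁻ x, ENNReal.ofReal |u (x, y)| * ENNReal.ofReal |u (x, y)| ≠ ∞ := by
    intro y
    have hcs := hasCompactSupport_section hc y
    have : Integrable fun x => u (x, y) ^ 2 :=
      Continuous.integrable_of_hasCompactSupport
        ((hu.continuous.comp (by fun_prop : Continuous fun x : ℝ => (x, y))).pow 2)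
        (hcs.comp_left (g := fun x : ℝ => x ^ 2) (by simp))
    have h2 := this.lintegral_lt_top.ne
    convert h2 using 3 with x
    rw [← ENNReal.ofReal_mul (abs_nonneg _), abs_mul_abs_self, sq]
  calc _ ≤ ∫⁻ z, ENNReal.ofReal ((u (z + h • ((0, 1) : ℝ × ℝ)) - u z) ^ 2) := by
        rw [Measure.volume_eq_prod, lintegral_prod_symm' _ (by fun_prop),
          lintegral_prod_symm' _ (by fun_prop)]
        refine lintegral_mono fun y => ?_
        have := lintegral_rearr_sub_le (fun x => hM (x, y + h)) (fun x => hM (x, y))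
          (hum.comp measurable_prodMk_right) (hum.comp measurable_prodMk_right)
          (hfin (y + h)) (hfin y)
        simpa [steinerFun] using this
    _ ≤ _ := by
        rw [Measure.volume_eq_prod, lintegral_prod _ (Measurable.aemeasurable (by fun_prop)),
          lintegral_prod _ (Measurable.aemeasurable (by fun_prop)),
          ← lintegral_const_mul' _ _ ENNReal.ofReal_ne_top]
        refine lintegral_mono fun x => ?_
        have h1 := lintegral_shift_le_deriv (g := fun y => u (x, y))
          (hu.comp (contDiff_const.prodMk contDiff_id)) hh
        simp_rw [deriv_comp_right hu] at h1
        simpa using h1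

lemma steinerFun_ne_zero (hM : ∀ z, |u z| ≤ M) {z : ℝ × ℝ} (h : steinerFun u z ≠ 0) :
    ENNReal.ofReal (2 * |z.1|) < volume {x | u (x, z.2) ≠ 0} := by
  have h1 := (lt_rearr_iff (fun x => hM (x, z.2)) le_rfl z.1).1
    (lt_of_le_of_ne (rearr_nonneg _ _) (Ne.symm h))
  simpa [distrib] using h1

end

lemma integrable_mul_of_bounded {α : Type*} [MeasurableSpace α] {μ : Measure α} {ψ g : α → ℝ}
    (hi : Integrable ψ μ) (hg : Measurable g) {N : ℝ} (hN : ∀ x, |g x| ≤ N) :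
    Integrable (fun x => ψ x * g x) μ :=
  hi.mul_bdd (c := N) hg.aestronglyMeasurable (Eventually.of_forall hN)

/-- Averaging a family of functions against a probability density does not increase a common
bound on the `L²` norms. -/
lemma lintegral_sq_average_le {α β : Type*} [MeasurableSpace α] [MeasurableSpace β]
    {μ : Measure α} {ν : Measure β} [SFinite μ] [SFinite ν] {ψ : β → ℝ} (hψm : Measurable ψ)
    (hψ0 : ∀ ζ, 0 ≤ ψ ζ) (hψ1 : ∫ ζ, ψ ζ ∂ν = 1) (hψi : Integrable ψ ν)
    {G : α → β → ℝ} (hG : Measurable (Function.uncurry G)) {N : ℝ} (hN : ∀ z ζ, |G z ζ| ≤ N)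
    {C : ℝ≥0∞} (h : ∀ ζ, ψ ζ ≠ 0 → ∫⁻ z, ENNReal.ofReal (G z ζ ^ 2) ∂μ ≤ C) :
    ∫⁻ z, ENNReal.ofReal ((∫ ζ, ψ ζ * G z ζ ∂ν) ^ 2) ∂μ ≤ C := by
  have hGz : ∀ z, Measurable (G z) := fun z => hG.comp measurable_prodMk_left
  have hN2 : ∀ z ζ, |G z ζ ^ 2| ≤ N ^ 2 := fun z ζ => by
    rw [abs_pow]; exact pow_le_pow_left₀ (abs_nonneg _) (hN z ζ) 2
  have hpt : ∀ z, ENNReal.ofReal ((∫ ζ, ψ ζ * G z ζ ∂ν) ^ 2) ≤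
      ∫⁻ ζ, ENNReal.ofReal (ψ ζ) * ENNReal.ofReal (G z ζ ^ 2) ∂ν := by
    intro z
    have hi2 := integrable_mul_of_bounded hψi ((hGz z).pow_const 2) (hN2 z)
    refine (ENNReal.ofReal_le_ofReal (sq_integral_mul_le hψ0 hψ1 hψi
      (integrable_mul_of_bounded hψi (hGz z) (hN z)) hi2)).trans (le_of_eq ?_)
    rw [ofReal_integral_eq_lintegral_ofReal hi2
      (Eventually.of_forall fun ζ => mul_nonneg (hψ0 ζ) (sq_nonneg _))]
    exact lintegral_congr fun ζ => ENNReal.ofReal_mul (hψ0 ζ)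
  have hm : Measurable (Function.uncurry fun z ζ =>
      ENNReal.ofReal (ψ ζ) * ENNReal.ofReal (G z ζ ^ 2)) :=
    (hψm.comp measurable_snd).ennreal_ofReal.mul (hG.pow_const 2).ennreal_ofReal
  calc _ ≤ ∫⁻ z, ∫⁻ ζ, ENNReal.ofReal (ψ ζ) * ENNReal.ofReal (G z ζ ^ 2) ∂ν ∂μ :=
        lintegral_mono hpt
    _ = ∫⁻ ζ, ∫⁻ z, ENNReal.ofReal (ψ ζ) * ENNReal.ofReal (G z ζ ^ 2) ∂μ ∂ν :=
        lintegral_lintegral_swap hm.aemeasurable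
    _ ≤ ∫⁻ ζ, ENNReal.ofReal (ψ ζ) * C ∂ν := by
        refine lintegral_mono fun ζ => ?_
        rw [lintegral_const_mul' _ _ ENNReal.ofReal_ne_top]
        rcases eq_or_ne (ψ ζ) 0 with h0 | h0
        · simp [h0]
        · exact mul_le_mul_right (h ζ h0) _
    _ = C := by
        rw [lintegral_mul_const _ hψm.ennreal_ofReal,
          ← ofReal_integral_eq_lintegral_ofReal hψi (Eventually.of_forall hψ0), hψ1,
          ENNReal.ofReal_one, one_mul]

section
variable {w ψ : ℝ × ℝ → ℝ} {M : ℝ}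

/-- A bound on difference quotients passes to the derivative of a mollification. -/
lemma lintegral_fderiv_mollify_le (hw : Measurable w) (hM : ∀ z, |w z| ≤ M) (hψm : Measurable ψ)
    (hψ0 : ∀ ζ, 0 ≤ ψ ζ) (hψ1 : ∫ ζ, ψ ζ = 1) (hψi : Integrable ψ)
    (hd : ContDiff ℝ 1 fun z => ∫ ζ, ψ ζ * w (z - ζ)) {e : ℝ × ℝ} {C : ℝ≥0∞}
    (hs : ∀ h : ℝ, 0 < h →
      ∫⁻ z, ENNReal.ofReal ((w (z + h • e) - w z) ^ 2) ≤ ENNReal.ofReal (h ^ 2) * C) :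
    ∫⁻ z, ENNReal.ofReal (fderiv ℝ (fun z => ∫ ζ, ψ ζ * w (z - ζ)) z e ^ 2) ≤ C := by
  set v : ℝ × ℝ → ℝ := fun z => ∫ ζ, ψ ζ * w (z - ζ) with hv
  have hvm : Measurable v := hd.continuous.measurable
  have hi : ∀ z, Integrable fun ζ => ψ ζ * w (z - ζ) := fun z =>
    integrable_mul_of_bounded hψi (hw.comp (measurable_const.sub measurable_id)) (fun _ => hM _)
  have hq : ∀ n : ℕ, ∫⁻ z, ENNReal.ofReal
      ((((n : ℝ) + 1) * (v (z + ((n : ℝ) + 1)⁻¹ • e) - v z)) ^ 2) ≤ C := by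
    intro n
    have hn : (0 : ℝ) < (n : ℝ) + 1 := by positivity
    set G : ℝ × ℝ → ℝ × ℝ → ℝ := fun z ζ =>
      ((n : ℝ) + 1) * (w (z + ((n : ℝ) + 1)⁻¹ • e - ζ) - w (z - ζ)) with hG
    have hvG : ∀ z, ((n : ℝ) + 1) * (v (z + ((n : ℝ) + 1)⁻¹ • e) - v z) = ∫ ζ, ψ ζ * G z ζ := by
      intro z
      rw [hv, ← integral_sub (hi _) (hi _), ← integral_const_mul]
      congr 1; ext ζ; simp only [hG]; ring
    simp_rw [hvG]
    refine lintegral_sq_average_le hψm hψ0 hψ1 hψi (N := ((n : ℝ) + 1) * (2 * M)) ?_ ?_ ?_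
    · have h1 : Measurable fun p : (ℝ × ℝ) × (ℝ × ℝ) => w (p.1 + ((n : ℝ) + 1)⁻¹ • e - p.2) :=
        hw.comp (by fun_prop)
      have h2 : Measurable fun p : (ℝ × ℝ) × (ℝ × ℝ) => w (p.1 - p.2) := hw.comp (by fun_prop)
      exact (h1.sub h2).const_mul _
    · intro z ζ
      rw [hG, abs_mul, abs_of_pos hn]
      refine mul_le_mul_of_nonneg_left ?_ hn.le
      refine (abs_sub _ _).trans ?_
      linarith [hM (z + ((n : ℝ) + 1)⁻¹ • e - ζ), hM (z - ζ)]
    · intro ζ _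
      have h1 := lintegral_sub_right_eq_self (μ := (volume : Measure (ℝ × ℝ)))
        (fun z => ENNReal.ofReal ((w (z + ((n : ℝ) + 1)⁻¹ • e) - w z) ^ 2)) ζ
      have h2 := hs _ (inv_pos.2 hn)
      rw [← h1] at h2
      calc ∫⁻ z, ENNReal.ofReal (G z ζ ^ 2)
          = ENNReal.ofReal (((n : ℝ) + 1) ^ 2) * ∫⁻ z, ENNReal.ofReal
              ((w (z - ζ + ((n : ℝ) + 1)⁻¹ • e) - w (z - ζ)) ^ 2) := by
            rw [← lintegral_const_mul' _ _ ENNReal.ofReal_ne_top]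
            refine lintegral_congr fun z => ?_
            rw [← ENNReal.ofReal_mul (by positivity), ← mul_pow]
            simp only [hG, add_sub_right_comm]
        _ ≤ ENNReal.ofReal (((n : ℝ) + 1) ^ 2) *
              (ENNReal.ofReal (((n : ℝ) + 1)⁻¹ ^ 2) * C) := mul_le_mul_right h2 _
        _ = C := by
            rw [← mul_assoc, ← ENNReal.ofReal_mul (by positivity), ← mul_pow,
              mul_inv_cancel₀ hn.ne']
            simp
  have hlim : ∀ z, Tendsto (fun n : ℕ => ENNReal.ofReal
      ((((n : ℝ) + 1) * (v (z + ((n : ℝ) + 1)⁻¹ • e) - v z)) ^ 2)) atTop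
      (𝓝 (ENNReal.ofReal (fderiv ℝ v z e ^ 2))) := by
    intro z
    have h1 := (hd.differentiable one_ne_zero z).hasFDerivAt.lim_real e
    have h2 : Tendsto (fun n : ℕ => (n : ℝ) + 1) atTop atTop :=
      tendsto_natCast_atTop_atTop.atTop_add tendsto_const_nhds
    have h3 := h1.comp h2
    exact (ENNReal.continuous_ofReal.tendsto _).comp (h3.pow 2)
  calc _ = ∫⁻ z, liminf (fun n : ℕ => ENNReal.ofReal
      ((((n : ℝ) + 1) * (v (z + ((n : ℝ) + 1)⁻¹ • e) - v z)) ^ 2)) atTop :=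
        lintegral_congr fun z => (hlim z).liminf_eq.symm
    _ ≤ liminf (fun n : ℕ => ∫⁻ z, ENNReal.ofReal
      ((((n : ℝ) + 1) * (v (z + ((n : ℝ) + 1)⁻¹ • e) - v z)) ^ 2)) atTop :=
        lintegral_liminf_le fun n => by fun_prop
    _ ≤ C := by
        refine (liminf_le_liminf (Eventually.of_forall hq)).trans ?_
        simp

lemma lintegral_shift_le_of_pos {e : ℝ × ℝ} {C : ℝ≥0∞} (hs : ∀ h : ℝ, 0 < h →
      ∫⁻ z, ENNReal.ofReal ((w (z + h • e) - w z) ^ 2) ≤ ENNReal.ofReal (h ^ 2) * C) (h : ℝ) :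
    ∫⁻ z, ENNReal.ofReal ((w (z + h • e) - w z) ^ 2) ≤ ENNReal.ofReal (h ^ 2) * C := by
  rcases lt_trichotomy h 0 with h0 | h0 | h0
  · have h1 := hs (-h) (by linarith)
    rw [neg_sq] at h1
    refine le_trans (le_of_eq ?_) h1
    rw [← lintegral_add_right_eq_self (μ := (volume : Measure (ℝ × ℝ)))
      (fun z => ENNReal.ofReal ((w (z + (-h) • e) - w z) ^ 2)) (h • e)]
    refine lintegral_congr fun z => ?_
    rw [show z + h • e + -h • e = z by simp, ← neg_sq]
    congr 2; ring
  · simp [h0]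
  · exact hs h h0

lemma lintegral_mollify_sub_le (hw : Measurable w) (hM : ∀ z, |w z| ≤ M) (hψm : Measurable ψ)
    (hψ0 : ∀ ζ, 0 ≤ ψ ζ) (hψ1 : ∫ ζ, ψ ζ = 1) (hψi : Integrable ψ) {δ : ℝ}
    (hψδ : ∀ ζ, ψ ζ ≠ 0 → ‖ζ‖ ≤ δ) {C₁ C₂ : ℝ≥0∞}
    (hs₁ : ∀ h : ℝ, 0 < h → ∫⁻ z, ENNReal.ofReal ((w (z + h • ((1, 0) : ℝ × ℝ)) - w z) ^ 2) ≤
      ENNReal.ofReal (h ^ 2) * C₁)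
    (hs₂ : ∀ h : ℝ, 0 < h → ∫⁻ z, ENNReal.ofReal ((w (z + h • ((0, 1) : ℝ × ℝ)) - w z) ^ 2) ≤
      ENNReal.ofReal (h ^ 2) * C₂) :
    ∫⁻ z, ENNReal.ofReal (((∫ ζ, ψ ζ * w (z - ζ)) - w z) ^ 2) ≤
      ENNReal.ofReal (2 * δ ^ 2) * (C₁ + C₂) := by
  have hi : ∀ z, Integrable fun ζ => ψ ζ * w (z - ζ) := fun z =>
    integrable_mul_of_bounded hψi (hw.comp (measurable_const.sub measurable_id)) (fun _ => hM _)
  have hvG : ∀ z, (∫ ζ, ψ ζ * w (z - ζ)) - w z = ∫ ζ, ψ ζ * (w (z - ζ) - w z) := by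
    intro z
    simp_rw [mul_sub]
    rw [integral_sub (hi z) (hψi.mul_const _), integral_mul_const, hψ1, one_mul]
  simp_rw [hvG]
  refine lintegral_sq_average_le hψm hψ0 hψ1 hψi (N := 2 * M) ?_ ?_ ?_
  · have h2 : Measurable fun p : (ℝ × ℝ) × (ℝ × ℝ) => w (p.1 - p.2) := hw.comp (by fun_prop)
    exact h2.sub (hw.comp measurable_fst)
  · intro z ζ
    refine (abs_sub _ _).trans ?_
    linarith [hM z, hM (z - ζ)]
  · rintro ⟨a, b⟩ hζ
    have hn := hψδ _ hζ
    have ha : a ^ 2 ≤ δ ^ 2 :=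
      sq_le_sq' (by linarith [neg_abs_le a, (norm_fst_le (a, b)).trans hn, Real.norm_eq_abs a])
        (by linarith [le_abs_self a, (norm_fst_le (a, b)).trans hn, Real.norm_eq_abs a])
    have hb : b ^ 2 ≤ δ ^ 2 :=
      sq_le_sq' (by linarith [neg_abs_le b, (norm_snd_le (a, b)).trans hn, Real.norm_eq_abs b])
        (by linarith [le_abs_self b, (norm_snd_le (a, b)).trans hn, Real.norm_eq_abs b])
    have e1 := lintegral_shift_le_of_pos hs₁ (-a)
    have e2 := lintegral_shift_le_of_pos hs₂ (-b)
    rw [← lintegral_add_right_eq_self (μ := (volume : Measure (ℝ × ℝ))) _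
      ((-a) • ((1, 0) : ℝ × ℝ))] at e2
    rw [neg_sq] at e1 e2
    have hz : ∀ z : ℝ × ℝ, z - (a, b) = z + (-a) • ((1, 0) : ℝ × ℝ) + (-b) • ((0, 1) : ℝ × ℝ) := by
      intro z; ext <;> simp <;> ring
    simp_rw [hz]
    set A : ℝ × ℝ → ℝ := fun z => w (z + (-a) • ((1, 0) : ℝ × ℝ)) - w z with hA
    set B : ℝ × ℝ → ℝ := fun z => w (z + (-a) • ((1, 0) : ℝ × ℝ) + (-b) • ((0, 1) : ℝ × ℝ)) -
      w (z + (-a) • ((1, 0) : ℝ × ℝ)) with hB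
    have hAm : Measurable A := by fun_prop
    calc _ ≤ ∫⁻ z, (ENNReal.ofReal 2 * ENNReal.ofReal (A z ^ 2) +
            ENNReal.ofReal 2 * ENNReal.ofReal (B z ^ 2)) := by
          refine lintegral_mono fun z => ?_
          rw [← ENNReal.ofReal_mul (by norm_num), ← ENNReal.ofReal_mul (by norm_num),
            ← ENNReal.ofReal_add (by positivity) (by positivity)]
          apply ENNReal.ofReal_le_ofReal
          simp only [hA, hB]
          nlinarith [sq_nonneg (A z - B z)]
      _ = (ENNReal.ofReal 2 * ∫⁻ z, ENNReal.ofReal (A z ^ 2)) +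
            ENNReal.ofReal 2 * ∫⁻ z, ENNReal.ofReal (B z ^ 2) := by
          rw [lintegral_add_left (by fun_prop), lintegral_const_mul' _ _ ENNReal.ofReal_ne_top,
            lintegral_const_mul' _ _ ENNReal.ofReal_ne_top]
      _ ≤ ENNReal.ofReal 2 * (ENNReal.ofReal (δ ^ 2) * C₁) +
            ENNReal.ofReal 2 * (ENNReal.ofReal (δ ^ 2) * C₂) := by
          refine add_le_add (mul_le_mul_right (e1.trans ?_) _) (mul_le_mul_right (e2.trans ?_) _)
          · exact mul_le_mul_left (ENNReal.ofReal_le_ofReal ha) _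
          · exact mul_le_mul_left (ENNReal.ofReal_le_ofReal hb) _
      _ = _ := by
          rw [ENNReal.ofReal_mul (by norm_num)]; ring

end

lemma integral_le_of_lintegral_ofReal_le {α : Type*} [MeasurableSpace α] {μ : Measure α}
    {f : α → ℝ} (hf : Measurable f) (h0 : ∀ x, 0 ≤ f x) {C : ℝ} (hC : 0 ≤ C)
    (h : ∫⁻ x, ENNReal.ofReal (f x) ∂μ ≤ ENNReal.ofReal C) : ∫ x, f x ∂μ ≤ C := by
  rw [integral_eq_lintegral_of_nonneg_ae (Eventually.of_forall h0) hf.aestronglyMeasurable]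
  exact ENNReal.toReal_le_of_le_ofReal hC h

lemma exists_mollifier {δ : ℝ} (hδ : 0 < δ) :
    ∃ ψ : ℝ × ℝ → ℝ, ContDiff ℝ (⊤ : ℕ∞) ψ ∧ HasCompactSupport ψ ∧ (∀ ζ, 0 ≤ ψ ζ) ∧
      ∫ ζ, ψ ζ = 1 ∧ ∀ ζ, ψ ζ ≠ 0 → ‖ζ‖ ≤ δ := by
  let f : ContDiffBump (0 : ℝ × ℝ) := ⟨δ / 2, δ, by linarith, by linarith⟩
  refine ⟨f.normed volume, f.contDiff_normed, f.hasCompactSupport_normed, f.nonneg_normed,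
    f.integral_normed, fun ζ hζ => ?_⟩
  have : ζ ∈ Function.support (f.normed volume) := hζ
  rw [f.support_normed_eq] at this
  exact (mem_ball_zero_iff.1 this).le

lemma integrable_sq_of_hasCompactSupport {α : Type*} [TopologicalSpace α] [MeasurableSpace α]
    [OpensMeasurableSpace α] {μ : Measure α} [IsFiniteMeasureOnCompacts μ] {v : α → ℝ}
    (hv : Continuous v) (hc : HasCompactSupport v) : Integrable (fun z => v z ^ 2) μ := by
  have h1 : HasCompactSupport fun z => v z ^ 2 := hc.comp_left (g := fun x : ℝ => x ^ 2) (by simp)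
  have h2 : Continuous fun z => v z ^ 2 := hv.pow 2
  exact h2.integrable_of_hasCompactSupport h1

section
variable {w : ℝ × ℝ → ℝ} {M : ℝ}

lemma integrable_of_bounded_of_eq_zero {f : ℝ × ℝ → ℝ} {N : ℝ} (hf : Measurable f)
    (hN : ∀ z, |f z| ≤ N) {K : Set (ℝ × ℝ)} (hK : IsCompact K) (h0 : ∀ z, z ∉ K → f z = 0) :
    Integrable f := by
  have h1 : IntegrableOn f K := by
    refine Measure.integrableOn_of_bounded (M := N) hK.measure_lt_top.ne hf.aestronglyMeasurable ?_
    exact Eventually.of_forall hN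
  exact (integrableOn_iff_integrable_of_support_subset
    fun z hz => by_contra fun hzK => hz (h0 z hzK)).1 h1

/-- A Poincaré inequality for test functions extends to bounded functions whose difference
quotients are bounded in `L²`. -/
lemma mul_integral_sq_le_of_shift {c C₁ C₂ : ℝ} (hc : 0 ≤ c) (hC₁ : 0 ≤ C₁) (hC₂ : 0 ≤ C₂)
    (hw : Measurable w) (hM : ∀ z, |w z| ≤ M) {K O : Set (ℝ × ℝ)} (hK : IsCompact K)
    (hO : IsOpen O) (hKO : K ⊆ O) (hwK : ∀ z, z ∉ K → w z = 0)
    (hs₁ : ∀ h : ℝ, 0 < h → ∫⁻ z, ENNReal.ofReal ((w (z + h • ((1, 0) : ℝ × ℝ)) - w z) ^ 2) ≤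
      ENNReal.ofReal (h ^ 2) * ENNReal.ofReal C₁)
    (hs₂ : ∀ h : ℝ, 0 < h → ∫⁻ z, ENNReal.ofReal ((w (z + h • ((0, 1) : ℝ × ℝ)) - w z) ^ 2) ≤
      ENNReal.ofReal (h ^ 2) * ENNReal.ofReal C₂)
    (hP : ∀ v : ℝ × ℝ → ℝ, ContDiff ℝ (⊤ : ℕ∞) v → HasCompactSupport v → tsupport v ⊆ O →
      c * ∫ z, v z ^ 2 ≤ (∫ z, fderiv ℝ v z (1, 0) ^ 2) + ∫ z, fderiv ℝ v z (0, 1) ^ 2) :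
    c * ∫ z, w z ^ 2 ≤ C₁ + C₂ := by
  have hM2 : ∀ z, |w z ^ 2| ≤ M ^ 2 := fun z => by
    rw [abs_pow]; exact pow_le_pow_left₀ (abs_nonneg _) (hM z) 2
  have key : ∀ η : ℝ, 0 < η →
      c * ∫ z, w z ^ 2 ≤ (1 + η) * (C₁ + C₂) + c * (2 * η ^ 2 + 2 * η) * (C₁ + C₂) := by
    intro η hη
    obtain ⟨δ₀, hδ₀, hKδ⟩ := hK.exists_cthickening_subset_open hO hKO
    set δ := min δ₀ η with hδ
    have hδ0 : 0 < δ := lt_min hδ₀ hη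
    obtain ⟨ψ, hψs, hψk, hψ0, hψ1, hψδ⟩ := exists_mollifier hδ0
    have hψc : Continuous ψ := hψs.continuous
    have hψi : Integrable ψ := hψc.integrable_of_hasCompactSupport hψk
    have hwl : LocallyIntegrable w := (integrable_of_bounded_of_eq_zero hw hM hK hwK).locallyIntegrable
    set v : ℝ × ℝ → ℝ := fun z => ∫ ζ, ψ ζ * w (z - ζ) with hv
    have hvs : ContDiff ℝ (⊤ : ℕ∞) v :=
      hψk.contDiff_convolution_left (ContinuousLinearMap.lsmul ℝ ℝ)
        hψs hwl
    have hv1 : ContDiff ℝ 1 v := hvs.of_le (by exact_mod_cast le_top)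
    have hsupp : Function.support v ⊆ cthickening δ K := by
      intro z hz
      by_contra hzK
      refine hz (integral_eq_zero_of_ae (Eventually.of_forall fun ζ => ?_))
      by_contra h
      have h1 : ψ ζ ≠ 0 := left_ne_zero_of_mul h
      have h2 : z - ζ ∈ K := by_contra fun h3 => right_ne_zero_of_mul h (hwK _ h3)
      refine hzK (mem_cthickening_of_dist_le z (z - ζ) δ K h2 ?_)
      simpa [dist_eq_norm] using hψδ ζ h1
    have hvc : HasCompactSupport v :=
      HasCompactSupport.of_support_subset_isCompact hK.cthickening hsupp
    have hvO : tsupport v ⊆ O :=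
      (closure_minimal hsupp isClosed_cthickening).trans
        ((cthickening_mono (min_le_left _ _) K).trans hKδ)
    have hvm : Measurable v := hv1.continuous.measurable
    have hfd : ∀ e, Measurable fun z => fderiv ℝ v z e ^ 2 := fun e =>
      (((hv1.continuous_fderiv one_ne_zero).clm_apply continuous_const).pow 2).measurable
    have e1 : ∫ z, fderiv ℝ v z (1, 0) ^ 2 ≤ C₁ :=
      integral_le_of_lintegral_ofReal_le (hfd _) (fun _ => sq_nonneg _) hC₁
        (lintegral_fderiv_mollify_le hw hM hψc.measurable hψ0 hψ1 hψi hv1 hs₁)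
    have e2 : ∫ z, fderiv ℝ v z (0, 1) ^ 2 ≤ C₂ :=
      integral_le_of_lintegral_ofReal_le (hfd _) (fun _ => sq_nonneg _) hC₂
        (lintegral_fderiv_mollify_le hw hM hψc.measurable hψ0 hψ1 hψi hv1 hs₂)
    have e3 : ∫ z, (v z - w z) ^ 2 ≤ 2 * δ ^ 2 * (C₁ + C₂) := by
      refine integral_le_of_lintegral_ofReal_le ((hvm.sub hw).pow_const 2)
        (fun _ => sq_nonneg _) (by positivity) ?_
      rw [ENNReal.ofReal_mul (by positivity), ENNReal.ofReal_add hC₁ hC₂]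
      exact lintegral_mollify_sub_le hw hM hψc.measurable hψ0 hψ1 hψi hψδ hs₁ hs₂
    have e4 := hP v hvs hvc hvO
    have hvi : Integrable fun z => v z ^ 2 := integrable_sq_of_hasCompactSupport hv1.continuous hvc
    have hwi : Integrable fun z => w z ^ 2 :=
      integrable_of_bounded_of_eq_zero (hw.pow_const 2) hM2 hK (fun z hz => by simp [hwK z hz])
    have hvwi : Integrable fun z => (v z - w z) ^ 2 := by
      refine Integrable.mono' ((hvi.add hwi).const_mul 2)
        ((hvm.sub hw).pow_const 2).aestronglyMeasurable (Eventually.of_forall fun z => ?_)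
      rw [Real.norm_eq_abs, abs_of_nonneg (sq_nonneg _)]
      simp only [Pi.add_apply]
      nlinarith [sq_nonneg (v z + w z)]
    have e5 : ∫ z, w z ^ 2 ≤
        (1 + η) * (∫ z, v z ^ 2) + (1 + 1 / η) * ∫ z, (v z - w z) ^ 2 := by
      rw [← integral_const_mul, ← integral_const_mul,
        ← integral_add (hvi.const_mul _) (hvwi.const_mul _)]
      refine integral_mono hwi ((hvi.const_mul _).add (hvwi.const_mul _)) fun z => ?_
      have h1 : (1 + η) * v z ^ 2 + (1 + 1 / η) * (v z - w z) ^ 2 - w z ^ 2 =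
          (η * v z + (v z - w z)) ^ 2 / η := by field_simp; ring
      have h2 : 0 ≤ (η * v z + (v z - w z)) ^ 2 / η := by positivity
      simp only
      linarith
    have h6 : (1 + 1 / η) * ∫ z, (v z - w z) ^ 2 ≤ (2 * η ^ 2 + 2 * η) * (C₁ + C₂) := by
      have hle : 2 * δ ^ 2 * (C₁ + C₂) ≤ 2 * η ^ 2 * (C₁ + C₂) := by
        have : δ ≤ η := min_le_right _ _
        gcongr
      calc _ ≤ (1 + 1 / η) * (2 * η ^ 2 * (C₁ + C₂)) := by gcongr; exact e3.trans hle
        _ = _ := by field_simp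
    calc c * ∫ z, w z ^ 2 ≤ c * ((1 + η) * (∫ z, v z ^ 2) + (2 * η ^ 2 + 2 * η) * (C₁ + C₂)) := by
          gcongr; linarith
      _ = (1 + η) * (c * ∫ z, v z ^ 2) + c * (2 * η ^ 2 + 2 * η) * (C₁ + C₂) := by ring
      _ ≤ _ := by gcongr; linarith
  have hcont : Tendsto (fun η : ℝ => (1 + η) * (C₁ + C₂) + c * (2 * η ^ 2 + 2 * η) * (C₁ + C₂))
      (𝓝[>] 0) (𝓝 ((1 + 0) * (C₁ + C₂) + c * (2 * 0 ^ 2 + 2 * 0) * (C₁ + C₂))) :=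
    (Continuous.tendsto (by fun_prop) 0).mono_left nhdsWithin_le_nhds
  have := ge_of_tendsto hcont (eventually_nhdsWithin_of_forall fun η hη => key η hη)
  simpa using this

end

/-- The Dirichlet energy over test functions supported inside `E` dominates `c` times the
squared `L²` norm. -/
def Poinc (E : Set E2) (c : ℝ) : Prop :=
  ∀ v : E2 → ℝ, ContDiff ℝ (⊤ : ℕ∞) v → HasCompactSupport v → tsupport v ⊆ interior E →
    c * ∫ x, v x ^ 2 ≤ ∫ x, ‖fderiv ℝ v x‖ ^ 2

lemma Poinc.mono_set {E F : Set E2} {c : ℝ} (h : Poinc F c) (hEF : E ⊆ F) : Poinc E c :=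
  fun v hv hc hs => h v hv hc (hs.trans (interior_mono hEF))

lemma Poinc.of_forall_tendsto {E : Set E2} {c : ℝ} {a : ℝ → ℝ}
    (ha : Tendsto a (𝓝[>] 0) (𝓝 c)) (h : ∀ ε > 0, Poinc E (a ε)) : Poinc E c := by
  intro v hv hc hs
  exact le_of_tendsto (ha.mul_const _)
    (eventually_nhdsWithin_of_forall fun ε hε => h ε hε v hv hc hs)

lemma dirichletEigenvalue_nonneg (E : Set E2) : 0 ≤ dirichletEigenvalue E := by
  refine Real.sInf_nonneg ?_
  rintro t ⟨u, -, -, -, -, rfl⟩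
  exact integral_nonneg fun _ => sq_nonneg _

lemma poinc_dirichletEigenvalue (E : Set E2) : Poinc E (dirichletEigenvalue E) := by
  intro v hv hc hs
  have h0 : 0 ≤ ∫ x, v x ^ 2 := integral_nonneg fun _ => sq_nonneg _
  rcases h0.eq_or_lt with h | h
  · rw [← h, mul_zero]; exact integral_nonneg fun _ => sq_nonneg _
  set N := ∫ x, v x ^ 2 with hN
  set a := (√N)⁻¹ with ha
  have ha2 : a ^ 2 = N⁻¹ := by rw [ha, inv_pow, Real.sq_sqrt h0]
  have hfd : ∀ x, ‖fderiv ℝ (fun x => a * v x) x‖ ^ 2 = N⁻¹ * ‖fderiv ℝ v x‖ ^ 2 := by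
    intro x
    rw [fderiv_const_mul ((hv.differentiable (by simp)) x), norm_smul, mul_pow, Real.norm_eq_abs,
      sq_abs, ha2]
  have hle : dirichletEigenvalue E ≤ N⁻¹ * ∫ x, ‖fderiv ℝ v x‖ ^ 2 := by
    refine csInf_le ⟨0, ?_⟩ ⟨fun x => a * v x, contDiff_const.mul hv, ?_, ?_, ?_, ?_⟩
    · rintro t ⟨u, -, -, -, -, rfl⟩
      exact integral_nonneg fun _ => sq_nonneg _
    · exact hc.mul_left
    · exact (closure_mono fun x hx => right_ne_zero_of_mul hx).trans hs
    · simp_rw [mul_pow, integral_const_mul, ha2]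
      exact inv_mul_cancel₀ h.ne'
    · simp_rw [hfd, integral_const_mul]
  calc _ ≤ (N⁻¹ * ∫ x, ‖fderiv ℝ v x‖ ^ 2) * N := mul_le_mul_of_nonneg_right hle h0
    _ = _ := by field_simp

lemma Poinc.le_dirichletEigenvalue {E : Set E2} {c : ℝ} (h : Poinc E c)
    (hE : (interior E).Nonempty) : c ≤ dirichletEigenvalue E := by
  refine le_csInf ?_ ?_
  · obtain ⟨x, hx⟩ := hE
    obtain ⟨f, hfs, hfc, hf, -, hfx⟩ := exists_contDiff_tsupport_subset (n := (⊤ : ℕ∞))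
      (isOpen_interior.mem_nhds hx)
    have hi : Integrable fun x => f x ^ 2 := integrable_sq_of_hasCompactSupport hf.continuous hfc
    have hN : 0 < ∫ x, f x ^ 2 := by
      refine Continuous.integral_pos_of_hasCompactSupport_nonneg_nonzero
        (hf.continuous.pow 2) ?_ (fun _ => sq_nonneg _) (x := x) (by simp [hfx])
      exact hfc.comp_left (g := fun x : ℝ => x ^ 2) (by simp)
    set N := ∫ x, f x ^ 2
    refine ⟨_, fun x => (√N)⁻¹ * f x, contDiff_const.mul hf, hfc.mul_left, ?_, ?_, rfl⟩
    · exact (closure_mono fun x hx => right_ne_zero_of_mul hx).trans hfs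
    · simp_rw [mul_pow, integral_const_mul, inv_pow, Real.sq_sqrt hN.le]
      exact inv_mul_cancel₀ hN.ne'
  · rintro t ⟨u, hu, hc, hs, h1, rfl⟩
    simpa [h1] using h u hu hc hs

/-- The identification of `ℝ × ℝ` with the Euclidean plane. -/
def toPlane : (ℝ × ℝ) ≃L[ℝ] E2 :=
  (ContinuousLinearEquiv.finTwoArrow ℝ ℝ).symm.trans
    (PiLp.continuousLinearEquiv 2 ℝ fun _ : Fin 2 => ℝ).symm

@[simp] lemma toPlane_zero (z : ℝ × ℝ) : toPlane z 0 = z.1 := rfl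
@[simp] lemma toPlane_one (z : ℝ × ℝ) : toPlane z 1 = z.2 := rfl

lemma measurePreserving_toPlane : MeasurePreserving toPlane :=
  (PiLp.volume_preserving_toLp (Fin 2)).comp (volume_preserving_finTwoArrow ℝ).symm

lemma integral_comp_toPlane (f : E2 → ℝ) : ∫ z, f (toPlane z) = ∫ x, f x :=
  measurePreserving_toPlane.integral_comp toPlane.toHomeomorph.measurableEmbedding f

lemma norm_sq_clm (φ : E2 →L[ℝ] ℝ) :
    ‖φ‖ ^ 2 = φ (toPlane (1, 0)) ^ 2 + φ (toPlane (0, 1)) ^ 2 := by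
  obtain ⟨a, rfl⟩ := (InnerProductSpace.toDual ℝ E2).surjective φ
  rw [LinearIsometryEquiv.norm_map, EuclideanSpace.norm_sq_eq]
  simp [PiLp.inner_apply, Fin.sum_univ_two]

lemma fderiv_comp_toPlane {v : E2 → ℝ} (hv : Differentiable ℝ v) (z e : ℝ × ℝ) :
    fderiv ℝ (fun z => v (toPlane z)) z e = fderiv ℝ v (toPlane z) (toPlane e) := by
  have := ((hv (toPlane z)).hasFDerivAt.comp z toPlane.hasFDerivAt).fderiv
  rw [show (fun z => v (toPlane z)) = v ∘ toPlane from rfl, this]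
  rfl

lemma integral_norm_fderiv_sq {v : E2 → ℝ} (hv : ContDiff ℝ 1 v) (hc : HasCompactSupport v) :
    ∫ x, ‖fderiv ℝ v x‖ ^ 2 = (∫ z, fderiv ℝ (fun z => v (toPlane z)) z (1, 0) ^ 2) +
      ∫ z, fderiv ℝ (fun z => v (toPlane z)) z (0, 1) ^ 2 := by
  have hu : ContDiff ℝ 1 fun z => v (toPlane z) := hv.comp toPlane.contDiff
  have huc : HasCompactSupport fun z => v (toPlane z) := hc.comp_homeomorph toPlane.toHomeomorph
  have hi : ∀ e : ℝ × ℝ, Integrable fun z => fderiv ℝ (fun z => v (toPlane z)) z e ^ 2 := fun e =>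
    integrable_sq_of_hasCompactSupport
      ((hu.continuous_fderiv one_ne_zero).clm_apply continuous_const) (huc.fderiv_apply ℝ e)
  rw [← integral_comp_toPlane, ← integral_add (hi _) (hi _)]
  refine integral_congr_ae (Eventually.of_forall fun z => ?_)
  simp only [norm_sq_clm, fderiv_comp_toPlane (hv.differentiable one_ne_zero)]

/-- Steiner symmetrization preserves Poincaré inequalities. -/
lemma Poinc.of_steiner {H K K' : Set E2} {c : ℝ} (hP : Poinc K' c) (hc : 0 ≤ c)
    (hK : IsCompact K) (hKK' : K ⊆ interior K')
    (hfib : ∀ x y : ℝ, ENNReal.ofReal (2 * |x|) < volume {x' : ℝ | toPlane (x', y) ∈ H} →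
      toPlane (x, y) ∈ K) : Poinc H c := by
  intro v hv hvc hvs
  have hv1 : ContDiff ℝ 1 v := hv.of_le (by exact_mod_cast le_top)
  set u : ℝ × ℝ → ℝ := fun z => v (toPlane z) with hu
  have hu1 : ContDiff ℝ 1 u := hv1.comp toPlane.contDiff
  have huc : HasCompactSupport u := hvc.comp_homeomorph toPlane.toHomeomorph
  obtain ⟨M, hM⟩ := huc.exists_bound_of_continuous hu1.continuous
  have hum := hu1.continuous.measurable
  have hM' : ∀ z, |steinerFun u z| ≤ M := fun z => by
    rw [steinerFun, abs_of_nonneg (rearr_nonneg _ _)]; exact rearr_le (fun x => hM (x, z.2)) z.1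
  have hintg : ∀ e : ℝ × ℝ, ∫⁻ z, ENNReal.ofReal (fderiv ℝ u z e ^ 2) =
      ENNReal.ofReal (∫ z, fderiv ℝ u z e ^ 2) := fun e => by
    rw [ofReal_integral_eq_lintegral_ofReal _ (Eventually.of_forall fun _ => sq_nonneg _)]
    exact integrable_sq_of_hasCompactSupport
      ((hu1.continuous_fderiv one_ne_zero).clm_apply continuous_const) (huc.fderiv_apply ℝ e)
  have hsq : ∫ z, steinerFun u z ^ 2 = ∫ x, v x ^ 2 := by
    rw [← integral_comp_toPlane, integral_eq_lintegral_of_nonneg_ae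
      (Eventually.of_forall fun _ => sq_nonneg _)
      ((measurable_steinerFun hM hum).pow_const 2).aestronglyMeasurable,
      lintegral_sq_steinerFun hM hum, integral_eq_lintegral_of_nonneg_ae
      (Eventually.of_forall fun _ => sq_nonneg _) (hum.pow_const 2).aestronglyMeasurable]
  rw [← hsq, integral_norm_fderiv_sq hv1 hvc]
  refine mul_integral_sq_le_of_shift (K := toPlane ⁻¹' K) (O := toPlane ⁻¹' interior K') hc
    (integral_nonneg fun _ => sq_nonneg _) (integral_nonneg fun _ => sq_nonneg _)
    (measurable_steinerFun hM hum) hM' ?_ (isOpen_interior.preimage toPlane.continuous)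
    (preimage_mono hKK') ?_ ?_ ?_ ?_
  · exact toPlane.toHomeomorph.isCompact_preimage.2 hK
  · intro z hz
    by_contra h
    refine hz (hfib z.1 z.2 ((steinerFun_ne_zero hM h).trans_le (measure_mono fun x hx => ?_)))
    have hx' : toPlane (x, z.2) ∈ interior H := hvs (subset_tsupport v hx)
    exact interior_subset (s := H) hx'
  · intro h hh
    rw [← hintg]
    exact lintegral_steinerFun_shift_fst hM hu1 huc hh
  · intro h hh
    rw [← hintg]
    exact lintegral_steinerFun_shift_snd hM hu1 huc hh
  · intro g hg hgc hgO
    set f : E2 → ℝ := fun x => g (toPlane.symm x) with hf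
    have hfg : (fun z => f (toPlane z)) = g := by ext z; simp [hf]
    have hfs : ContDiff ℝ (⊤ : ℕ∞) f := hg.comp toPlane.symm.contDiff
    have hfc : HasCompactSupport f := hgc.comp_homeomorph toPlane.symm.toHomeomorph
    have h1 := hP f hfs hfc (by
      intro x hx
      have : toPlane.symm x ∈ tsupport g :=
        toPlane.symm.continuous.closure_preimage_subset (Function.support g) hx
      have := hgO this
      rwa [mem_preimage, toPlane.apply_symm_apply] at this)
    rw [integral_norm_fderiv_sq (hfs.of_le (by exact_mod_cast le_top)) hfc,
      ← integral_comp_toPlane, hfg] at h1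
    simpa [hf] using h1

lemma integral_comp_similarity (f : E2 → ℝ) (B : E2 ≃ₗᵢ[ℝ] E2) {σ : ℝ} (hσ : 0 < σ) (x₁ : E2) :
    ∫ z, f (x₁ + σ • B z) = (σ ^ 2)⁻¹ * ∫ x, f x := by
  rw [B.measurePreserving.integral_comp B.toHomeomorph.measurableEmbedding
    (fun z => f (x₁ + σ • z)), Measure.integral_comp_smul volume (fun z => f (x₁ + z)),
    integral_add_left_eq_self f x₁, finrank_euclideanSpace_fin, abs_of_pos (by positivity),
    smul_eq_mul]

/-- Behaviour of Poincaré constants under similarities. -/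
lemma Poinc.of_similarity {E F : Set E2} {c : ℝ} (hP : Poinc F c) (B : E2 ≃ₗᵢ[ℝ] E2) {σ : ℝ}
    (hσ : 0 < σ) (x₁ : E2) (hEF : ∀ z, x₁ + σ • B z ∈ E → z ∈ F) : Poinc E (c * (σ ^ 2)⁻¹) := by
  intro u hu huc hus
  let k : E2 ≃ₜ E2 := B.toHomeomorph.trans
    ((Homeomorph.smulOfNeZero σ hσ.ne').trans (Homeomorph.addLeft x₁))
  have hk : ∀ z, k z = x₁ + σ • B z := fun _ => rfl
  have hks : ContDiff ℝ (⊤ : ℕ∞) k := by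
    have h1 : ContDiff ℝ (⊤ : ℕ∞) fun z => x₁ + σ • B z :=
      contDiff_const.add (B.toContinuousLinearEquiv.contDiff.const_smul σ)
    exact h1
  have hkd : ∀ z, HasFDerivAt k (σ • (B.toContinuousLinearEquiv : E2 →L[ℝ] E2)) z := fun z =>
    (B.toContinuousLinearEquiv.hasFDerivAt.const_smul σ).const_add x₁
  have hfd : ∀ z, ‖fderiv ℝ (u ∘ k) z‖ ^ 2 = σ ^ 2 * ‖fderiv ℝ u (k z)‖ ^ 2 := by
    intro z
    rw [((hu.differentiable (by simp) (k z)).hasFDerivAt.comp z (hkd z)).fderiv,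
      ContinuousLinearMap.comp_smul, norm_smul, mul_pow, Real.norm_eq_abs, sq_abs]
    congr 2
    exact ContinuousLinearMap.opNorm_comp_linearIsometryEquiv _ B
  have h1 := hP (u ∘ k) (hu.comp hks) (huc.comp_homeomorph k) (by
    have h2 : tsupport (u ∘ k) ⊆ k ⁻¹' interior E := fun x hx =>
      hus (k.continuous.closure_preimage_subset (Function.support u) hx)
    refine h2.trans (interior_maximal (fun z hz => hEF z ?_) (isOpen_interior.preimage k.continuous))
    exact interior_subset hz)
  simp_rw [hfd, integral_const_mul, Function.comp_apply, hk] at h1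
  rw [integral_comp_similarity (fun x => u x ^ 2) B hσ x₁,
    integral_comp_similarity (fun x => ‖fderiv ℝ u x‖ ^ 2) B hσ x₁] at h1
  calc _ = c * ((σ ^ 2)⁻¹ * ∫ x, u x ^ 2) := by ring
    _ ≤ _ := h1
    _ = _ := by field_simp

lemma Poinc.dilate {E : Set E2} {c : ℝ} (hP : Poinc E c) {s : ℝ} (hs : 0 < s) :
    Poinc {z | s⁻¹ • z ∈ E} (c * (s ^ 2)⁻¹) :=
  hP.of_similarity (LinearIsometryEquiv.refl ℝ E2) hs 0 fun z hz => by
    simpa [smul_smul, inv_mul_cancel₀ hs.ne'] using hz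

lemma tendsto_dilate (c : ℝ) :
    Tendsto (fun ε : ℝ => c * ((1 + ε) ^ 2)⁻¹) (𝓝[>] 0) (𝓝 c) := by
  have : ContinuousAt (fun ε : ℝ => c * ((1 + ε) ^ 2)⁻¹) 0 := by
    refine continuousAt_const.mul (ContinuousAt.inv₀ (by fun_prop) (by norm_num))
  simpa using this.tendsto.mono_left nhdsWithin_le_nhds

/-- The centrally symmetric hexagon with vertices `±p, ±q, ±r`, described by the strips bounded
by its pairs of opposite sides. -/
def hexStrips (p q r : E2) : Set E2 :=
  {z | |det2 (q - p) z| ≤ det2 p q ∧ |det2 (r - q) z| ≤ det2 q r ∧ |det2 (p + r) z| ≤ det2 p r}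

/-- The hexagon of unit area with two horizontal diagonals of length `w`, symmetric with respect
to both axes. -/
def symHex (w ρ : ℝ) : Set E2 :=
  {z | 2 * |z 0| ≤ w ∧ 2 * (1 - 2 * ρ) * |z 0| + w ^ 2 * |z 1| ≤ w * (1 - ρ)}

lemma isCompact_symHex {w ρ : ℝ} (hw : 0 < w) (hρ : ρ ≤ 1 / 2) : IsCompact (symHex w ρ) := by
  refine IsCompact.of_isClosed_subset (((isCompact_Icc (a := -w) (b := w)).prod
    (isCompact_Icc (a := -((1 - ρ) / w)) (b := (1 - ρ) / w))).image toPlane.continuous) ?_ ?_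
  · have h1 : IsClosed {z : E2 | 2 * |z 0| ≤ w} := isClosed_le (by fun_prop) (by fun_prop)
    have h2 : IsClosed {z : E2 | 2 * (1 - 2 * ρ) * |z 0| + w ^ 2 * |z 1| ≤ w * (1 - ρ)} :=
      isClosed_le (by fun_prop) (by fun_prop)
    exact h1.inter h2
  · rintro z ⟨h1, h2⟩
    refine ⟨(z 0, z 1), ⟨?_, ?_⟩, ?_⟩
    · exact abs_le.1 (by linarith [abs_nonneg (z 0)])
    · refine abs_le.1 ((le_div_iff₀ hw).2 ?_)
      have : 0 ≤ (1 - 2 * ρ) * |z 0| := mul_nonneg (by linarith) (abs_nonneg _)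
      have h3 : w * (|z 1| * w) ≤ w * (1 - ρ) := by nlinarith
      exact le_of_mul_le_mul_left h3 hw
    · ext i; fin_cases i <;> rfl

lemma inv_smul_mem_symHex {w ρ t : ℝ} (ht : 0 < t) {z : E2} : t⁻¹ • z ∈ symHex w ρ ↔
    2 * |z 0| ≤ t * w ∧ 2 * (1 - 2 * ρ) * |z 0| + w ^ 2 * |z 1| ≤ t * (w * (1 - ρ)) := by
  have e : ∀ i, |(t⁻¹ • z) i| = |z i| / t := fun i => by
    rw [PiLp.smul_apply, smul_eq_mul, abs_mul, abs_of_pos (inv_pos.2 ht), div_eq_inv_mul]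
  have h : 2 * (1 - 2 * ρ) * (|z 0| / t) + w ^ 2 * (|z 1| / t) =
      (2 * (1 - 2 * ρ) * |z 0| + w ^ 2 * |z 1|) / t := by ring
  rw [symHex, mem_ofPred_eq, e, e, h, div_le_iff₀' ht, ← mul_div_assoc, div_le_iff₀' ht]

lemma symHex_subset_interior_dilate {w ρ s : ℝ} (hw : 0 < w) (hρ : ρ ≤ 1 / 2) (hs : 1 < s) :
    symHex w ρ ⊆ interior {z | s⁻¹ • z ∈ symHex w ρ} := by
  have hs0 : 0 < s := by linarith
  have hsub : {z : E2 | 2 * |z 0| < s * w ∧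
      2 * (1 - 2 * ρ) * |z 0| + w ^ 2 * |z 1| < s * (w * (1 - ρ))} ⊆
      {z | s⁻¹ • z ∈ symHex w ρ} := by
    rintro z ⟨h1, h2⟩
    exact (inv_smul_mem_symHex hs0).2 ⟨h1.le, h2.le⟩
  refine Subset.trans ?_ (interior_maximal hsub ?_)
  · rintro z ⟨h1, h2⟩
    have : 0 < w * (1 - ρ) := mul_pos hw (by linarith)
    exact ⟨by nlinarith, by nlinarith⟩
  · have h1 : IsOpen {z : E2 | 2 * |z 0| < s * w} := isOpen_lt (by fun_prop) (by fun_prop)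
    have h2 : IsOpen {z : E2 | 2 * (1 - 2 * ρ) * |z 0| + w ^ 2 * |z 1| < s * (w * (1 - ρ))} :=
      isOpen_lt (by fun_prop) (by fun_prop)
    exact h1.inter h2

lemma two_mul_abs_mul_le_of_lt_volume {S : Set ℝ} {a b κ x : ℝ} (hκ : 0 ≤ κ)
    (hS : ∀ t ∈ S, a ≤ κ * t ∧ κ * t ≤ b) (hx : ENNReal.ofReal (2 * |x|) < volume S) :
    2 * |x| * κ ≤ b - a := by
  have hne : S.Nonempty := by
    rw [nonempty_iff_ne_empty]; rintro rfl; simp at hx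
  obtain ⟨t, ht⟩ := hne
  rcases hκ.eq_or_lt with h0 | h0
  · have := hS t ht
    rw [← h0, mul_zero]; linarith
  · have hsub : S ⊆ Icc (a / κ) (b / κ) := fun t ht =>
      ⟨(div_le_iff₀' h0).2 (hS t ht).1, (le_div_iff₀' h0).2 (hS t ht).2⟩
    have h1 := hx.trans_le (measure_mono hsub)
    rw [Real.volume_Icc, ← sub_div] at h1
    have h2 := (ENNReal.ofReal_lt_ofReal_iff_of_nonneg (by positivity)).1 h1
    exact ((lt_div_iff₀ h0).1 h2).le

lemma toPlane_mem_symHex_of_lt_volume {p q r : E2} {w : ℝ} (hw : 0 < w) (h0 : p 0 - r 0 = w)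
    (h1 : p 1 = r 1) (hsum : det2 p q + det2 q r + det2 p r = 1) (hR0 : 0 ≤ det2 p r)
    (hR : det2 p r ≤ 1 / 2) (x y : ℝ)
    (hx : ENNReal.ofReal (2 * |x|) < volume {x' : ℝ | toPlane (x', y) ∈ hexStrips p q r}) :
    toPlane (x, y) ∈ symHex w (det2 p r) := by
  have hr0 : r 0 = p 0 - w := by linarith
  have hRh : det2 p r = w * p 1 := by rw [det2, ← h1, hr0]; ring
  have hPQ : det2 p q + det2 q r = w * q 1 := by rw [det2, det2, ← h1, hr0]; ring
  have hh : 0 ≤ p 1 := by rw [hRh] at hR0; exact nonneg_of_mul_nonneg_right hR0 hw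
  have hk' : w * (q 1 - p 1) = 1 - 2 * det2 p r := by rw [mul_sub, ← hRh, ← hPQ]; linarith
  have hk : 0 ≤ q 1 - p 1 := nonneg_of_mul_nonneg_right (by rw [hk']; linarith) hw
  have hmem : ∀ t, toPlane (t, y) ∈ hexStrips p q r →
      (|(q 0 - p 0) * y - (q 1 - p 1) * t| ≤ det2 p q ∧
       |(p 0 - w - q 0) * y + (q 1 - p 1) * t| ≤ det2 q r ∧
       |(2 * p 0 - w) * y - 2 * p 1 * t| ≤ w * p 1) := by
    rintro t ⟨a, b, c⟩
    rw [← hRh]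
    refine ⟨?_, ?_, ?_⟩
    · convert a using 2
      simp only [det2, PiLp.sub_apply, toPlane_zero, toPlane_one]
    · convert b using 2
      simp only [det2, PiLp.sub_apply, toPlane_zero, toPlane_one, ← h1, hr0]; ring
    · convert c using 2
      simp only [det2, PiLp.add_apply, toPlane_zero, toPlane_one, ← h1, hr0]; ring
  have e1 : 2 * |x| * (q 1 - p 1) ≤ w * (q 1 - y) := by
    have := two_mul_abs_mul_le_of_lt_volume (a := -det2 q r - (p 0 - w - q 0) * y)
      (b := det2 p q + (q 0 - p 0) * y) hk (fun t ht => ?_) hx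
    · nlinarith
    · obtain ⟨a, b, -⟩ := hmem t ht
      exact ⟨by linarith [(abs_le.1 b).1], by linarith [(abs_le.1 a).1]⟩
  have e2 : 2 * |x| * (q 1 - p 1) ≤ w * (q 1 + y) := by
    have := two_mul_abs_mul_le_of_lt_volume (a := -det2 p q + (q 0 - p 0) * y)
      (b := det2 q r - (p 0 - w - q 0) * y) hk (fun t ht => ?_) hx
    · nlinarith
    · obtain ⟨a, b, -⟩ := hmem t ht
      exact ⟨by linarith [(abs_le.1 a).2], by linarith [(abs_le.1 b).2]⟩
  have e3 : 2 * |x| * (2 * p 1) ≤ 2 * (w * p 1) := by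
    have := two_mul_abs_mul_le_of_lt_volume (a := -(w * p 1) + (2 * p 0 - w) * y)
      (b := w * p 1 + (2 * p 0 - w) * y) (κ := 2 * p 1) (by positivity) (fun t ht => ?_) hx
    · linarith
    · obtain ⟨-, -, a⟩ := hmem t ht
      exact ⟨by linarith [(abs_le.1 a).2], by linarith [(abs_le.1 a).1]⟩
  have e4 : 2 * |x| * (q 1 - p 1) + w * |y| ≤ w * q 1 := by
    rcases abs_cases y with ⟨h, -⟩ | ⟨h, -⟩ <;> rw [h] <;> linarith
  refine ⟨?_, ?_⟩
  · change 2 * |x| ≤ w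
    rcases hh.eq_or_lt with h | h
    · rw [← h, sub_zero] at e4
      have hq : 0 < q 1 := by
        rw [← h, sub_zero, hRh, ← h] at hk'
        by_contra hc
        nlinarith
      have : 0 ≤ w * |y| := by positivity
      exact le_of_mul_le_mul_right (by linarith) hq
    · nlinarith
  · change 2 * (1 - 2 * det2 p r) * |x| + w ^ 2 * |y| ≤ w * (1 - det2 p r)
    have h5 : 1 - det2 p r = w * q 1 := by linarith
    rw [← hk', h5]
    nlinarith

lemma Poinc.hexStrips_of_horizontal {p q r : E2} {w c : ℝ} (hw : 0 < w) (h0 : p 0 - r 0 = w)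
    (h1 : p 1 = r 1) (hsum : det2 p q + det2 q r + det2 p r = 1) (hR0 : 0 ≤ det2 p r)
    (hR : det2 p r ≤ 1 / 2) (hc : 0 ≤ c) (hP : Poinc (symHex w (det2 p r)) c) :
    Poinc (hexStrips p q r) c := by
  refine Poinc.of_forall_tendsto (tendsto_dilate c) fun ε hε => ?_
  have hε1 : 1 < 1 + ε := by linarith
  exact (hP.dilate (s := 1 + ε) (by linarith)).of_steiner (by positivity)
    (isCompact_symHex hw hR) (symHex_subset_interior_dilate hw hR hε1)
    (toPlane_mem_symHex_of_lt_volume hw h0 h1 hsum hR0 hR)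

/-- The rotation taking the unit vector `(a, b)` to `(1, 0)`. -/
def rotPlane (a b : ℝ) (h : a ^ 2 + b ^ 2 = 1) : E2 ≃ₗᵢ[ℝ] E2 where
  toFun z := toPlane (a * z 0 + b * z 1, -b * z 0 + a * z 1)
  invFun z := toPlane (a * z 0 - b * z 1, b * z 0 + a * z 1)
  map_add' x y := by ext i; fin_cases i <;> simp <;> ring
  map_smul' s x := by ext i; fin_cases i <;> simp <;> ring
  left_inv x := by
    ext i; fin_cases i
    · simp; linear_combination (x 0) * h
    · simp; linear_combination (x 1) * h
  right_inv x := by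
    ext i; fin_cases i
    · simp; linear_combination (x 0) * h
    · simp; linear_combination (x 1) * h
  norm_map' x := by
    rw [EuclideanSpace.norm_eq, EuclideanSpace.norm_eq]
    congr 1
    simp [Fin.sum_univ_two]
    linear_combination (x 0 ^ 2 + x 1 ^ 2) * h

@[simp] lemma rotPlane_zero {a b : ℝ} (h : a ^ 2 + b ^ 2 = 1) (z : E2) :
    rotPlane a b h z 0 = a * z 0 + b * z 1 := rfl

@[simp] lemma rotPlane_one {a b : ℝ} (h : a ^ 2 + b ^ 2 = 1) (z : E2) :
    rotPlane a b h z 1 = -b * z 0 + a * z 1 := rfl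

lemma det2_rotPlane {a b : ℝ} (h : a ^ 2 + b ^ 2 = 1) (u v : E2) :
    det2 (rotPlane a b h u) (rotPlane a b h v) = det2 u v := by
  simp only [det2, rotPlane_zero, rotPlane_one]
  linear_combination (u 0 * v 1 - u 1 * v 0) * h

lemma Poinc.hexStrips {p q r : E2} {w c : ℝ} (hw : 0 < w)
    (hpr : (p 0 - r 0) ^ 2 + (p 1 - r 1) ^ 2 = w ^ 2)
    (hsum : det2 p q + det2 q r + det2 p r = 1) (hR0 : 0 ≤ det2 p r)
    (hR : det2 p r ≤ 1 / 2) (hc : 0 ≤ c) (hP : Poinc (symHex w (det2 p r)) c) :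
    Poinc (hexStrips p q r) c := by
  have hab : ((p 0 - r 0) / w) ^ 2 + ((p 1 - r 1) / w) ^ 2 = 1 := by
    rw [div_pow, div_pow, ← add_div, hpr, div_self (by positivity)]
  set B := rotPlane _ _ hab with hB
  have hd : ∀ u v, det2 (B u) (B v) = det2 u v := det2_rotPlane hab
  have h1 : Poinc (_root_.hexStrips (B p) (B q) (B r)) c := by
    refine Poinc.hexStrips_of_horizontal hw ?_ ?_ (by simpa only [hd]) (by rwa [hd]) (by rwa [hd])
      hc (by rwa [hd])
    · simp only [hB, rotPlane_zero]
      field_simp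
      linear_combination hpr
    · simp only [hB, rotPlane_one]
      field_simp
      ring
  have h2 := h1.of_similarity (E := _root_.hexStrips p q r) B.symm one_pos 0 (by
    intro z hz
    rw [one_smul, zero_add] at hz
    obtain ⟨a, b, c⟩ := hz
    rw [← hd, map_sub, B.apply_symm_apply, ← hd p] at a
    rw [← hd, map_sub, B.apply_symm_apply, ← hd q] at b
    rw [← hd, map_add, B.apply_symm_apply, ← hd p] at c
    exact ⟨a, b, c⟩)
  simpa using h2

lemma symHex_subset_hexStrips {w ρ : ℝ} (hw : 0 < w) (hρ0 : 0 ≤ ρ) (hρ : ρ ≤ 1 / 2) :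
    symHex w ρ ⊆ hexStrips (toPlane (0, (1 - ρ) / w)) (toPlane (-(w / 2), ρ / w))
      (toPlane (-(w / 2), -(ρ / w))) := by
  rintro z ⟨h1, h2⟩
  set x := z 0
  set y := z 1
  have hx := abs_le.1 (show |x| ≤ w / 2 by linarith)
  have key : (1 - 2 * ρ) / w * |x| + w / 2 * |y| ≤ (1 - ρ) / 2 := by
    have : (1 - 2 * ρ) / w * |x| + w / 2 * |y| =
      (2 * (1 - 2 * ρ) * |x| + w ^ 2 * |y|) / (2 * w) := by field_simp
    rw [this, div_le_iff₀ (by positivity)]; linarith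
  have hk : 0 ≤ (1 - 2 * ρ) / w := div_nonneg (by linarith) hw.le
  have hab : ∀ s t : ℝ, s ≤ |x| → t ≤ |y| →
      (1 - 2 * ρ) / w * s + w / 2 * t ≤ (1 - ρ) / 2 := fun s t hs ht =>
    (add_le_add (mul_le_mul_of_nonneg_left hs hk)
      (mul_le_mul_of_nonneg_left ht (by positivity))).trans key
  have a1 := hab x y (le_abs_self _) (le_abs_self _)
  have a2 := hab (-x) y (neg_le_abs _) (le_abs_self _)
  have a3 := hab x (-y) (le_abs_self _) (neg_le_abs _)
  have a4 := hab (-x) (-y) (neg_le_abs _) (neg_le_abs _)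
  have hsub : (1 - 2 * ρ) / w = (1 - ρ) / w - ρ / w := by ring
  rw [hsub] at a1 a2 a3 a4
  have hρw : 0 ≤ ρ / w := by positivity
  have e1 : (1 - ρ) / w * (w / 2) = (1 - ρ) / 2 := by field_simp
  have e2 : ρ / w * w = ρ := by field_simp
  refine ⟨abs_le.2 ?_, abs_le.2 ?_, abs_le.2 ?_⟩
  · simp only [det2, PiLp.sub_apply, toPlane_zero, toPlane_one]
    exact ⟨by linarith, by linarith⟩
  · simp only [det2, PiLp.sub_apply, toPlane_zero, toPlane_one]
    exact ⟨by nlinarith, by nlinarith⟩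
  · simp only [det2, PiLp.add_apply, toPlane_zero, toPlane_one]
    exact ⟨by linarith, by linarith⟩

lemma Poinc.symHex_of_next {z ρ c : ℝ} (hz : 0 < z) (hρ0 : 0 ≤ ρ) (hρ : ρ ≤ 1 / 2) (hc : 0 ≤ c)
    (hP : Poinc (symHex √(z / 4 + 1 / z) ((1 - ρ) / 2)) c) : Poinc (symHex √z ρ) c := by
  have hw : 0 < √z := Real.sqrt_pos.2 hz
  have hsq : √z ^ 2 = z := Real.sq_sqrt hz.le
  refine Poinc.mono_set ?_ (symHex_subset_hexStrips hw hρ0 hρ)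
  have hR : det2 (toPlane (0, (1 - ρ) / √z)) (toPlane (-(√z / 2), -(ρ / √z))) = (1 - ρ) / 2 := by
    simp only [det2, toPlane_zero, toPlane_one]; field_simp; ring
  refine Poinc.hexStrips (w := √(z / 4 + 1 / z)) (by positivity) ?_ ?_ ?_ ?_ hc (by rwa [hR])
  · rw [Real.sq_sqrt (by positivity)]
    simp only [toPlane_zero, toPlane_one]
    have : (0 - -(√z / 2)) ^ 2 + ((1 - ρ) / √z - -(ρ / √z)) ^ 2 = √z ^ 2 / 4 + 1 / √z ^ 2 := by
      field_simp; ring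
    rw [this, hsq]
  · simp only [det2, toPlane_zero, toPlane_one]
    field_simp; ring
  · rw [hR]; linarith
  · rw [hR]; linarith

/-- The action of one symmetrization step on the parameters of `symHex`. -/
def nextParam (a : ℝ × ℝ) : ℝ × ℝ := (a.1 / 4 + 1 / a.1, (1 - a.2) / 2)

lemma Poinc.symHex_of_iterate {c : ℝ} (hc : 0 ≤ c) (n : ℕ) : ∀ {a : ℝ × ℝ}, 0 < a.1 → 0 ≤ a.2 →
    a.2 ≤ 1 / 2 → Poinc (symHex √(nextParam^[n] a).1 (nextParam^[n] a).2) c →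
      Poinc (symHex √a.1 a.2) c := by
  induction n with
  | zero => intro a _ _ _ h; exact h
  | succ n ih =>
    intro a h0 h1 h2 h
    refine Poinc.symHex_of_next h0 h1 h2 hc (ih (a := nextParam a) ?_ ?_ ?_ ?_)
    · have : 0 < a.1 / 4 + 1 / a.1 := by positivity
      exact this
    · change 0 ≤ (1 - a.2) / 2; linarith
    · change (1 - a.2) / 2 ≤ 1 / 2; linarith
    · rwa [Function.iterate_succ_apply] at h

lemma abs_next_sub_le {z s : ℝ} (hs0 : 0 < s) (hs : s ^ 2 = 4 / 3) (hz : 1 ≤ z) :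
    |z / 4 + 1 / z - s| ≤ 3 / 4 * |z - s| := by
  have hs1 : 1 ≤ s := by nlinarith
  have h1 : 1 / s = 3 / 4 * s := by field_simp; linarith
  have h2 : z / 4 + 1 / z - s = (1 / 4 - 1 / (z * s)) * (z - s) := by
    have : (1 / 4 - 1 / (z * s)) * (z - s) = z / 4 - s / 4 - 1 / s + 1 / z := by
      field_simp; ring
    rw [this, h1]; ring
  rw [h2, abs_mul]
  refine mul_le_mul_of_nonneg_right ?_ (abs_nonneg _)
  have h3 : 1 / (z * s) ≤ 1 := by
    rw [div_le_one (by positivity)]; nlinarith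
  have h4 : 0 ≤ 1 / (z * s) := by positivity
  exact abs_le.2 ⟨by linarith, by linarith⟩

lemma one_le_next {z : ℝ} (hz : 0 < z) : 1 ≤ z / 4 + 1 / z := by
  have : z / 4 + 1 / z - 1 = (z / 2 - 1) ^ 2 / z := by field_simp; ring
  have h2 : 0 ≤ (z / 2 - 1) ^ 2 / z := by positivity
  linarith

lemma tendsto_iterate_nextParam {s : ℝ} (hs0 : 0 < s) (hs : s ^ 2 = 4 / 3) {a : ℝ × ℝ}
    (ha : 0 < a.1) : Tendsto (fun n => nextParam^[n] a) atTop (𝓝 (s, 1 / 3)) := by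
  have hpos : ∀ n, 1 ≤ (nextParam^[n + 1] a).1 := by
    intro n
    induction n with
    | zero => exact one_le_next ha
    | succ n ih =>
      rw [Function.iterate_succ_apply']
      exact one_le_next (by linarith)
  have hb1 : ∀ n, |(nextParam^[n + 1] a).1 - s| ≤ (3 / 4) ^ n * |(nextParam a).1 - s| := by
    intro n
    induction n with
    | zero => simp
    | succ n ih =>
      rw [Function.iterate_succ_apply']
      refine (abs_next_sub_le hs0 hs (hpos n)).trans ?_
      rw [pow_succ]; linarith
  have hb2 : ∀ n, |(nextParam^[n + 1] a).2 - 1 / 3| ≤ (3 / 4) ^ n * |(nextParam a).2 - 1 / 3| := by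
    intro n
    induction n with
    | zero => simp
    | succ n ih =>
      rw [Function.iterate_succ_apply']
      have : (nextParam (nextParam^[n + 1] a)).2 - 1 / 3 =
        -(1 / 2) * ((nextParam^[n + 1] a).2 - 1 / 3) := by simp only [nextParam]; ring
      rw [this, abs_mul, pow_succ, abs_neg, abs_of_pos (by norm_num)]
      linarith [abs_nonneg ((nextParam^[n + 1] a).2 - 1 / 3)]
  have hgeo : ∀ C : ℝ, Tendsto (fun n : ℕ => (3 / 4 : ℝ) ^ n * C) atTop (𝓝 0) := fun C => by
    simpa using (tendsto_pow_atTop_nhds_zero_of_lt_one (r := (3 / 4 : ℝ)) (by norm_num)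
      (by norm_num)).mul_const C
  rw [← tendsto_add_atTop_iff_nat 1]
  refine Tendsto.prodMk_nhds ?_ ?_
  · exact tendsto_iff_dist_tendsto_zero.2 (squeeze_zero (fun _ => dist_nonneg) hb1 (hgeo _))
  · exact tendsto_iff_dist_tendsto_zero.2 (squeeze_zero (fun _ => dist_nonneg) hb2 (hgeo _))

lemma eventually_symHex_subset_dilate {s t : ℝ} (hs0 : 0 < s) (ht : 1 < t) :
    ∀ᶠ a : ℝ × ℝ in 𝓝 (s, 1 / 3), symHex √a.1 a.2 ⊆ {z | t⁻¹ • z ∈ symHex √s (1 / 3)} := by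
  have hw : 0 < √s := Real.sqrt_pos.2 hs0
  have ht0 : 0 < t := by linarith
  have c0 : ContinuousAt (fun a : ℝ × ℝ => √a.1) (s, 1 / 3) := by fun_prop
  have c1 : ContinuousAt (fun a : ℝ × ℝ => s / a.1 * (√a.1 * (1 - a.2)) +
      √a.1 * |1 / 3 - s / a.1 * (1 - 2 * a.2)|) (s, 1 / 3) := by
    have h : ContinuousAt (fun a : ℝ × ℝ => s / a.1) (s, 1 / 3) :=
      continuousAt_const.div continuousAt_fst hs0.ne'
    have h' : ContinuousAt (fun a : ℝ × ℝ => a.2) (s, 1 / 3) := continuousAt_snd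
    exact (h.mul (c0.mul (continuousAt_const.sub h'))).add
      (c0.mul (continuousAt_const.sub (h.mul (continuousAt_const.sub
        (continuousAt_const.mul h')))).abs)
  have e0 : ∀ᶠ a : ℝ × ℝ in 𝓝 (s, 1 / 3), √a.1 < t * √s :=
    c0.eventually (gt_mem_nhds (show √s < t * √s by nlinarith))
  have e1 : ∀ᶠ a : ℝ × ℝ in 𝓝 (s, 1 / 3), s / a.1 * (√a.1 * (1 - a.2)) +
      √a.1 * |1 / 3 - s / a.1 * (1 - 2 * a.2)| < t * (√s * (1 - 1 / 3)) := by
    refine c1.eventually (gt_mem_nhds ?_)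
    simp only [div_self hs0.ne']
    norm_num
    nlinarith
  have e2 : ∀ᶠ a : ℝ × ℝ in 𝓝 (s, 1 / 3), 0 < a.1 :=
    continuousAt_fst.eventually (lt_mem_nhds hs0)
  filter_upwards [e0, e1, e2] with a h0 h1 h2
  rintro z ⟨hz1, hz2⟩
  refine (inv_smul_mem_symHex ht0).2 ⟨by linarith, ?_⟩
  · rw [Real.sq_sqrt hs0.le]
    rw [Real.sq_sqrt h2.le] at hz2
    have h3 : s * |z 1| ≤ s / a.1 * (√a.1 * (1 - a.2) - 2 * (1 - 2 * a.2) * |z 0|) := by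
      have : s * |z 1| = s / a.1 * (a.1 * |z 1|) := by field_simp
      rw [this]
      refine mul_le_mul_of_nonneg_left (by linarith) (by positivity)
    have h4 : 2 * |z 0| * (1 / 3 - s / a.1 * (1 - 2 * a.2)) ≤
        √a.1 * |1 / 3 - s / a.1 * (1 - 2 * a.2)| :=
      (mul_le_mul_of_nonneg_left (le_abs_self _) (by positivity)).trans
        (mul_le_mul_of_nonneg_right hz1 (abs_nonneg _))
    nlinarith

/-- Iterated symmetrization reduces every `symHex` to the regular one. -/
lemma Poinc.symHex {s w ρ c : ℝ} (hs0 : 0 < s) (hs : s ^ 2 = 4 / 3) (hw : 0 < w) (hρ0 : 0 ≤ ρ)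
    (hρ : ρ ≤ 1 / 2) (hc : 0 ≤ c) (hP : Poinc (symHex √s (1 / 3)) c) :
    Poinc (_root_.symHex w ρ) c := by
  refine Poinc.of_forall_tendsto (tendsto_dilate c) fun ε hε => ?_
  have h1 := hP.dilate (s := 1 + ε) (by linarith)
  obtain ⟨n, hn⟩ := ((tendsto_iterate_nextParam hs0 hs (a := (w ^ 2, ρ)) (by positivity)).eventually
    (eventually_symHex_subset_dilate hs0 (t := 1 + ε) (by linarith))).exists
  have h2 := Poinc.symHex_of_iterate (a := (w ^ 2, ρ)) (by positivity) n (by positivity) hρ0 hρ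
    (h1.mono_set hn)
  simpa [Real.sqrt_sq hw.le] using h2

lemma le_volume_fiber {C : Set E2} (hC : Convex ℝ C) {a b : E2} (ha : a ∈ C) (hb : b ∈ C)
    {x l : ℝ} (hax : a 0 = x) (hbx : b 0 = x) (hl : b 1 - a 1 = l) :
    ENNReal.ofReal l ≤ volume {y : ℝ | toPlane (x, y) ∈ C} := by
  have hc : Convex ℝ {y : ℝ | toPlane (x, y) ∈ C} := by
    intro y hy y' hy' s t hs ht hst
    have h1 := hC hy hy' hs ht hst
    rw [← map_smul, ← map_smul, ← map_add, Prod.smul_mk, Prod.smul_mk, Prod.mk_add_mk,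
      ← add_smul, hst, one_smul] at h1
    exact h1
  have e : ∀ c : E2, c 0 = x → toPlane (x, c 1) = c := fun c hc => by
    ext i; fin_cases i
    · exact hc.symm
    · rfl
  have ha' : a 1 ∈ {y : ℝ | toPlane (x, y) ∈ C} := by simpa [e a hax] using ha
  have hb' : b 1 ∈ {y : ℝ | toPlane (x, y) ∈ C} := by simpa [e b hbx] using hb
  have := measure_mono (μ := volume) (hc.ordConnected.out ha' hb')
  rwa [Real.volume_Icc, hl] at this

lemma le_setLIntegral_Ioc {g : ℝ → ℝ≥0∞} {φ : ℝ → ℝ} (hφ : Continuous φ) {a b : ℝ}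
    (hab : a ≤ b) (h0 : ∀ x ∈ Ioc a b, 0 ≤ φ x) (h : ∀ x ∈ Ioc a b, ENNReal.ofReal (φ x) ≤ g x) :
    ENNReal.ofReal (∫ x in a..b, φ x) ≤ ∫⁻ x in Ioc a b, g x := by
  rw [intervalIntegral.integral_of_le hab, ofReal_integral_eq_lintegral_ofReal
    (hφ.integrableOn_Ioc) ((ae_restrict_iff' measurableSet_Ioc).2 (Eventually.of_forall h0))]
  exact setLIntegral_mono' measurableSet_Ioc h

lemma setLIntegral_Ioc_add {g : ℝ → ℝ≥0∞} {a b c : ℝ} (hab : a ≤ b) (hbc : b ≤ c) :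
    (∫⁻ x in Ioc a b, g x) + ∫⁻ x in Ioc b c, g x = ∫⁻ x in Ioc a c, g x := by
  rw [← lintegral_union measurableSet_Ioc (Ioc_disjoint_Ioc_of_le le_rfl),
    Ioc_union_Ioc_eq_Ioc hab hbc]

lemma le_volume_of_vertical {C : Set E2} (hC : Convex ℝ C) (hm : MeasurableSet C)
    (hneg : ∀ z ∈ C, -z ∈ C) {p q r : E2} (hp : p ∈ C) (hq : q ∈ C) (hr : r ∈ C) {h k w : ℝ}
    (hh : 0 ≤ h) (hk : 0 ≤ k) (hw : 0 ≤ w) (hp0 : p 0 = h) (hr0 : r 0 = h)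
    (hq0 : q 0 = h + k) (hpr : r 1 - p 1 = w) :
    ENNReal.ofReal (2 * (h * w) + k * w) ≤ volume C := by
  set g : ℝ → ℝ≥0∞ := fun x => volume {y : ℝ | toPlane (x, y) ∈ C} with hg
  have hvol : volume C = ∫⁻ x, g x := by
    rw [← measurePreserving_toPlane.measure_preimage hm.nullMeasurableSet,
      Measure.volume_eq_prod, Measure.prod_apply (toPlane.continuous.measurable hm)]
    rfl
  have hmid : ∀ x ∈ Ioc (-h) h, ENNReal.ofReal w ≤ g x := by
    rintro x ⟨h1, h2⟩
    have h0 : 0 < h := by linarith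
    have hs : 0 ≤ (h + x) / (2 * h) := div_nonneg (by linarith) (by linarith)
    have ht : 0 ≤ (h - x) / (2 * h) := div_nonneg (by linarith) (by linarith)
    have hst : (h + x) / (2 * h) + (h - x) / (2 * h) = 1 := by field_simp; ring
    refine le_volume_fiber hC (hC hp (hneg r hr) hs ht hst) (hC hr (hneg p hp) hs ht hst) ?_ ?_ ?_
    · simp [hp0, hr0]; field_simp; ring
    · simp [hp0, hr0]; field_simp; ring
    · simp only [PiLp.add_apply, PiLp.smul_apply, PiLp.neg_apply, smul_eq_mul]
      linear_combination ((h + x) / (2 * h) + (h - x) / (2 * h)) * hpr + w * hst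
  have hright : ∀ x ∈ Ioc h (h + k), ENNReal.ofReal (w / k * (h + k - x)) ≤ g x ∧
      ENNReal.ofReal (w / k * (h + k - x)) ≤ g (-x) := by
    rintro x ⟨h1, h2⟩
    have h0 : 0 < k := by linarith
    have hs : 0 ≤ (h + k - x) / k := div_nonneg (by linarith) (by linarith)
    have ht : 0 ≤ (x - h) / k := div_nonneg (by linarith) (by linarith)
    have hst : (h + k - x) / k + (x - h) / k = 1 := by field_simp; ring
    have ep : (((h + k - x) / k) • p + ((x - h) / k) • q) 0 = x := by
      simp [hp0, hq0]; field_simp; ring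
    have er : (((h + k - x) / k) • r + ((x - h) / k) • q) 0 = x := by
      simp [hr0, hq0]; field_simp; ring
    have hd : (((h + k - x) / k) • r + ((x - h) / k) • q) 1 -
        (((h + k - x) / k) • p + ((x - h) / k) • q) 1 = w / k * (h + k - x) := by
      simp only [PiLp.add_apply, PiLp.smul_apply, smul_eq_mul]
      linear_combination ((h + k - x) / k) * hpr
    have mp := hC hp hq hs ht hst
    have mr := hC hr hq hs ht hst
    refine ⟨le_volume_fiber hC mp mr ep er hd,
      le_volume_fiber hC (hneg _ mr) (hneg _ mp) ?_ ?_ ?_⟩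
    · rw [PiLp.neg_apply, er]
    · rw [PiLp.neg_apply, ep]
    · rw [PiLp.neg_apply, PiLp.neg_apply, ← hd]; ring
  have hwk : 0 ≤ w / k := by positivity
  have hI : ∫ x in h..(h + k), w / k * (h + k - x) = k * w / 2 := by
    rw [intervalIntegral.integral_const_mul,
      intervalIntegral.integral_comp_sub_left (fun x => x), integral_id]
    rcases hk.eq_or_lt with h0 | h0
    · simp [← h0]
    · field_simp; ring
  have i1 := le_setLIntegral_Ioc (g := g) (φ := fun x => w / k * (h + k - x)) (by fun_prop)
    (by linarith : h ≤ h + k) (fun x hx => mul_nonneg hwk (by linarith [hx.2]))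
    (fun x hx => (hright x hx).1)
  have i2 := le_setLIntegral_Ioc (g := g) (φ := fun _ => w) (by fun_prop)
    (by linarith : -h ≤ h) (fun x hx => hw) hmid
  have i3 := le_setLIntegral_Ioc (g := fun x => g (-x)) (φ := fun x => w / k * (h + k - x))
    (by fun_prop) (by linarith : h ≤ h + k) (fun x hx => mul_nonneg hwk (by linarith [hx.2]))
    (fun x hx => (hright x hx).2)
  have hrefl : ∫⁻ x in Ioc h (h + k), g (-x) = ∫⁻ x in Ioc (-(h + k)) (-h), g x := by
    have := (Measure.measurePreserving_neg (volume : Measure ℝ)).setLIntegral_comp_preimage_emb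
      (MeasurableEquiv.neg ℝ).measurableEmbedding g (Ico (-(h + k)) (-h))
    rw [← restrict_Ico_eq_restrict_Ioc (μ := (volume : Measure ℝ)) (a := -(h + k)), ← this]
    simp
  rw [hI] at i1 i3
  rw [hrefl] at i3
  rw [intervalIntegral.integral_const] at i2
  calc ENNReal.ofReal (2 * (h * w) + k * w)
      = ENNReal.ofReal (k * w / 2) + ENNReal.ofReal ((h - -h) • w) +
          ENNReal.ofReal (k * w / 2) := by
        rw [smul_eq_mul, ← ENNReal.ofReal_add (by positivity) (by
          have := mul_nonneg hh hw; nlinarith), ← ENNReal.ofReal_add (by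
          have := mul_nonneg hh hw; have := mul_nonneg hk hw; nlinarith) (by positivity)]
        congr 1; ring
    _ ≤ (∫⁻ x in Ioc (-(h + k)) (-h), g x) + (∫⁻ x in Ioc (-h) h, g x) +
          ∫⁻ x in Ioc h (h + k), g x := add_le_add (add_le_add i3 i2) i1
    _ = ∫⁻ x in Ioc (-(h + k)) (h + k), g x := by
        rw [setLIntegral_Ioc_add (by linarith) (by linarith),
          setLIntegral_Ioc_add (by linarith) (by linarith)]
    _ ≤ volume C := by rw [hvol]; exact setLIntegral_le_lintegral _ _

lemma ofReal_det2_le_volume {C : Set E2} (hC : Convex ℝ C) (hm : MeasurableSet C)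
    (hneg : ∀ z ∈ C, -z ∈ C) {p q r : E2} (hp : p ∈ C) (hq : q ∈ C) (hr : r ∈ C)
    (hpr : p ≠ r) (hR : 0 ≤ det2 p r) (hPQ : det2 p r ≤ det2 p q + det2 q r) :
    ENNReal.ofReal (det2 p q + det2 q r + det2 p r) ≤ volume C := by
  set w := √((p 0 - r 0) ^ 2 + (p 1 - r 1) ^ 2) with hw
  have hpos : 0 < (p 0 - r 0) ^ 2 + (p 1 - r 1) ^ 2 := by
    by_contra hcon
    refine hpr ?_
    have h1 : p 0 - r 0 = 0 := by nlinarith [sq_nonneg (p 0 - r 0), sq_nonneg (p 1 - r 1)]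
    have h2 : p 1 - r 1 = 0 := by nlinarith [sq_nonneg (p 0 - r 0), sq_nonneg (p 1 - r 1)]
    ext i; fin_cases i
    · exact sub_eq_zero.1 h1
    · exact sub_eq_zero.1 h2
  have hw0 : 0 < w := Real.sqrt_pos.2 hpos
  have hw2 : w ^ 2 = (p 0 - r 0) ^ 2 + (p 1 - r 1) ^ 2 := Real.sq_sqrt hpos.le
  have hab : ((r 1 - p 1) / w) ^ 2 + ((p 0 - r 0) / w) ^ 2 = 1 := by
    rw [div_pow, div_pow, ← add_div, hw2, div_eq_one_iff_eq hpos.ne']; ring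
  set B := rotPlane _ _ hab with hB
  have hvol : volume (B.symm ⁻¹' C) = volume C :=
    B.symm.measurePreserving.measure_preimage hm.nullMeasurableSet
  have hmem : ∀ z ∈ C, B z ∈ B.symm ⁻¹' C := fun z hz => by simpa using hz
  have key := le_volume_of_vertical (C := B.symm ⁻¹' C) (h := det2 p r / w)
    (k := (det2 p q + det2 q r - det2 p r) / w) (w := w)
    (hC.linear_preimage B.symm.toLinearEquiv.toLinearMap) (B.symm.continuous.measurable hm)
    (fun z hz => by simpa using hneg _ hz) (hmem p hp) (hmem q hq) (hmem r hr) (by positivity)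
    (div_nonneg (by linarith) hw0.le) hw0.le ?_ ?_ ?_ ?_
  · rw [hvol] at key
    refine le_trans (le_of_eq ?_) key
    congr 1; field_simp; ring
  · simp only [hB, rotPlane_zero, det2]; ring
  · simp only [hB, rotPlane_zero, det2]; ring
  · simp only [hB, rotPlane_zero, det2]; ring
  · simp only [hB, rotPlane_one]; field_simp; rw [hw2]; ring

/-- The centrally symmetric hexagon spanned by `p`, `q`, `r` and their opposites. -/
def hexHull (p q r : E2) : Set E2 := convexHull ℝ ({p, q, r, -p, -q, -r} : Set E2)

lemma isCompact_hexHull (p q r : E2) : IsCompact (hexHull p q r) :=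
  (Set.toFinite _).isCompact_convexHull ℝ

lemma neg_mem_hexHull {p q r z : E2} (hz : z ∈ hexHull p q r) : -z ∈ hexHull p q r := by
  have h : -hexHull p q r = hexHull p q r := by
    unfold hexHull
    rw [← convexHull_neg]; congr 1; ext z
    simp; tauto
  rw [← h]; simpa using hz

lemma abs_det2_le_iff {v z : E2} {a : ℝ} :
    |det2 v z| ≤ a ↔ z ∈ {z : E2 | det2 v z ≤ a} ∩ {z : E2 | -a ≤ det2 v z} := by
  rw [abs_le]; exact and_comm

lemma isLinearMap_det2 (v : E2) : IsLinearMap ℝ (det2 v) where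
  map_add x y := by simp only [det2, PiLp.add_apply]; ring
  map_smul c x := by simp only [det2, PiLp.smul_apply, smul_eq_mul]; ring

lemma convex_abs_det2_le (v : E2) (a : ℝ) : Convex ℝ {z : E2 | |det2 v z| ≤ a} := by
  have : {z : E2 | |det2 v z| ≤ a} = {z : E2 | det2 v z ≤ a} ∩ {z : E2 | -a ≤ det2 v z} :=
    Set.ext fun z => abs_det2_le_iff
  rw [this]
  exact (convex_halfSpace_le (isLinearMap_det2 v) a).inter
    (convex_halfSpace_ge (isLinearMap_det2 v) (-a))

lemma hexHull_subset_abs_det2_le {p q r v : E2} {a : ℝ} (hp : |det2 v p| ≤ a)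
    (hq : |det2 v q| ≤ a) (hr : |det2 v r| ≤ a) : hexHull p q r ⊆ {z : E2 | |det2 v z| ≤ a} := by
  refine convexHull_min ?_ (convex_abs_det2_le v a)
  have hn : ∀ z : E2, det2 v (-z) = -det2 v z := fun z => by simp only [det2, PiLp.neg_apply]; ring
  rintro z (rfl | rfl | rfl | rfl | rfl | rfl) <;> simpa [hn]

lemma hexHull_subset_hexStrips {p q r a b c : E2} (hp : p ∈ hexStrips a b c)
    (hq : q ∈ hexStrips a b c) (hr : r ∈ hexStrips a b c) :
    hexHull p q r ⊆ hexStrips a b c := fun _ hz =>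
  ⟨hexHull_subset_abs_det2_le hp.1 hq.1 hr.1 hz,
    hexHull_subset_abs_det2_le hp.2.1 hq.2.1 hr.2.1 hz,
    hexHull_subset_abs_det2_le hp.2.2 hq.2.2 hr.2.2 hz⟩

lemma volume_hexHull_eq_zero {p q r : E2} (hP : det2 p q = 0) (hQ : det2 q r = 0)
    (hR : det2 p r = 0) : volume (hexHull p q r) = 0 := by
  obtain ⟨v, hv, h1, h2, h3⟩ :
      ∃ v : E2, v ≠ 0 ∧ det2 v p = 0 ∧ det2 v q = 0 ∧ det2 v r = 0 := by
    by_cases hp : p = 0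
    · by_cases hq : q = 0
      · by_cases hr : r = 0
        · exact ⟨EuclideanSpace.single 0 1, by simp, by simp [hp, hq, hr, det2]⟩
        · exact ⟨r, hr, by simp [hp, hq, det2, mul_comm]⟩
      · exact ⟨q, hq, by simp [hp, det2], by simp [det2, mul_comm], hQ⟩
    · exact ⟨p, hp, by simp [det2, mul_comm], hP, hR⟩
  have hsub : hexHull p q r ⊆ (LinearMap.ker (isLinearMap_det2 v).mk' : Set E2) := fun z hz => by
    have := hexHull_subset_abs_det2_le (v := v) (a := 0) (by simp [h1]) (by simp [h2]) (by simp [h3]) hz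
    simpa using this
  refine measure_mono_null hsub (Measure.addHaar_submodule _ _ fun htop => hv ?_)
  have h : toPlane (-v 1, v 0) ∈ LinearMap.ker (isLinearMap_det2 v).mk' := by rw [htop]; trivial
  have h' : v 0 * v 0 + v 1 * v 1 = 0 := by
    simpa [det2] using h
  ext i; fin_cases i
  · exact (mul_self_add_mul_self_eq_zero.1 h').1
  · exact (mul_self_add_mul_self_eq_zero.1 h').2

lemma hexStrips_subset_smul {p q r : E2} {t : ℝ} (ht : 1 ≤ t) :
    hexStrips p q r ⊆ hexStrips (t • p) (t • q) (t • r) := by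
  have key : ∀ {v z a b : E2}, |det2 v z| ≤ det2 a b →
      |det2 (t • v) z| ≤ det2 (t • a) (t • b) := by
    intro v z a b h
    have e1 : det2 (t • v) z = t * det2 v z := by simp [det2]; ring
    have e2 : det2 (t • a) (t • b) = t * (t * det2 a b) := by simp [det2]; ring
    have h0 : 0 ≤ det2 a b := (abs_nonneg _).trans h
    rw [e1, e2, abs_mul, abs_of_nonneg (by linarith)]
    refine mul_le_mul_of_nonneg_left (h.trans ?_) (by linarith)
    nlinarith
  rintro z ⟨h1, h2, h3⟩
  refine ⟨?_, ?_, ?_⟩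
  · rw [← smul_sub]; exact key h1
  · rw [← smul_sub]; exact key h2
  · rw [← smul_add]; exact key h3

lemma Poinc.of_subset_hexStrips {s c : ℝ} (hs0 : 0 < s) (hs : s ^ 2 = 4 / 3) (hc : 0 ≤ c)
    (hP : Poinc (_root_.symHex √s (1 / 3)) c) {C : Set E2} (hC : Convex ℝ C) (hm : MeasurableSet C)
    (hneg : ∀ z ∈ C, -z ∈ C) (hvol : volume C ≤ 1) {p q r : E2} (hp : p ∈ C) (hq : q ∈ C)
    (hr : r ∈ C) (hR : 0 ≤ det2 p r) (hPQ : det2 p r ≤ det2 p q + det2 q r)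
    (hA : 0 < det2 p q + det2 q r + det2 p r) (hsub : C ⊆ _root_.hexStrips p q r) :
    Poinc C c := by
  have hpr : p ≠ r := by
    rintro rfl
    simp only [det2] at hA
    linarith
  set A := det2 p q + det2 q r + det2 p r with hAdef
  have hA1 : A ≤ 1 := by
    have := (ofReal_det2_le_volume hC hm hneg hp hq hr hpr hR hPQ).trans hvol
    rwa [← hAdef, ENNReal.ofReal_le_one] at this
  set t := (√A)⁻¹ with htdef
  have ht : 1 ≤ t := (one_le_inv₀ (Real.sqrt_pos.2 hA)).2 (Real.sqrt_le_one.2 hA1)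
  have htA : t ^ 2 * A = 1 := by
    rw [htdef, inv_pow, Real.sq_sqrt hA.le, inv_mul_cancel₀ hA.ne']
  have hdet : ∀ a b : E2, det2 (t • a) (t • b) = t ^ 2 * det2 a b := fun a b => by
    simp [det2]; ring
  refine Poinc.mono_set ?_ (hsub.trans (hexStrips_subset_smul ht))
  have hpos : 0 < ((t • p) 0 - (t • r) 0) ^ 2 + ((t • p) 1 - (t • r) 1) ^ 2 := by
    by_contra hcon
    have h1 : (t • p) 0 - (t • r) 0 = 0 := by
      nlinarith [sq_nonneg ((t • p) 0 - (t • r) 0), sq_nonneg ((t • p) 1 - (t • r) 1)]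
    have h2 : (t • p) 1 - (t • r) 1 = 0 := by
      nlinarith [sq_nonneg ((t • p) 0 - (t • r) 0), sq_nonneg ((t • p) 1 - (t • r) 1)]
    refine hpr (smul_right_injective E2 (by linarith : t ≠ 0) ?_)
    ext i; fin_cases i
    · exact sub_eq_zero.1 h1
    · exact sub_eq_zero.1 h2
  have hR0 : 0 ≤ det2 (t • p) (t • r) := by rw [hdet]; positivity
  have hR1 : det2 (t • p) (t • r) ≤ 1 / 2 := by
    rw [hdet]; nlinarith [sq_nonneg t]
  exact Poinc.hexStrips (Real.sqrt_pos.2 hpos) (Real.sq_sqrt hpos.le).symm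
    (by rw [hdet, hdet, hdet]; linarith) hR0 hR1 hc
    (Poinc.symHex hs0 hs (Real.sqrt_pos.2 hpos) hR0 hR1 hc hP)

lemma Poinc.hexHull_of_nonneg {s c : ℝ} (hs0 : 0 < s) (hs : s ^ 2 = 4 / 3) (hc : 0 ≤ c)
    (hP : Poinc (_root_.symHex √s (1 / 3)) c) {p q r : E2} (hvol : volume (_root_.hexHull p q r) = 1)
    (h1 : 0 ≤ det2 p q) (h2 : 0 ≤ det2 q r) (h3 : 0 ≤ det2 p r) :
    Poinc (_root_.hexHull p q r) c := by
  have hA : 0 < det2 p q + det2 q r + det2 p r := by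
    by_contra hcon
    have := volume_hexHull_eq_zero (p := p) (q := q) (r := r) (by linarith) (by linarith)
      (by linarith)
    rw [hvol] at this
    exact one_ne_zero this
  have hp : p ∈ _root_.hexHull p q r := subset_convexHull ℝ _ (by simp)
  have hq : q ∈ _root_.hexHull p q r := subset_convexHull ℝ _ (by simp)
  have hr : r ∈ _root_.hexHull p q r := subset_convexHull ℝ _ (by simp)
  have key : ∀ {a b d : E2}, a ∈ _root_.hexHull p q r → b ∈ _root_.hexHull p q r →
      d ∈ _root_.hexHull p q r → 0 ≤ det2 a d → det2 a d ≤ det2 a b + det2 b d →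
      0 < det2 a b + det2 b d + det2 a d → p ∈ _root_.hexStrips a b d →
      q ∈ _root_.hexStrips a b d → r ∈ _root_.hexStrips a b d → Poinc (_root_.hexHull p q r) c :=
    fun ha hb hd h4 h5 h6 m1 m2 m3 => Poinc.of_subset_hexStrips hs0 hs hc hP
      (convex_convexHull ℝ _) (isCompact_hexHull p q r).measurableSet
      (fun z hz => neg_mem_hexHull hz) hvol.le ha hb hd h4 h5 h6
      (hexHull_subset_hexStrips m1 m2 m3)
  simp only [_root_.hexStrips, det2, abs_le, Set.mem_ofPred_eq, PiLp.sub_apply, PiLp.add_apply] at *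
  by_cases c1 : det2 p q + det2 q r < det2 p r
  · simp only [det2] at c1
    refine key hp hp hr ?_ ?_ ?_ ?_ ?_ ?_ <;> (try refine ⟨⟨?_, ?_⟩, ⟨?_, ?_⟩, ?_, ?_⟩) <;> linarith
  by_cases c2 : det2 q r + det2 p r < det2 p q
  · simp only [det2] at c2
    refine key hp hq hq ?_ ?_ ?_ ?_ ?_ ?_ <;> (try refine ⟨⟨?_, ?_⟩, ⟨?_, ?_⟩, ?_, ?_⟩) <;> linarith
  by_cases c3 : det2 p q + det2 p r < det2 q r
  · simp only [det2] at c3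
    refine key hq hq hr ?_ ?_ ?_ ?_ ?_ ?_ <;> (try refine ⟨⟨?_, ?_⟩, ⟨?_, ?_⟩, ?_, ?_⟩) <;> linarith
  simp only [det2, not_lt] at c1 c2 c3
  refine key hp hq hr ?_ ?_ ?_ ?_ ?_ ?_ <;> (try refine ⟨⟨?_, ?_⟩, ⟨?_, ?_⟩, ?_, ?_⟩) <;> linarith

lemma Poinc.hexHull {s c : ℝ} (hs0 : 0 < s) (hs : s ^ 2 = 4 / 3) (hc : 0 ≤ c)
    (hP : Poinc (_root_.symHex √s (1 / 3)) c) {p q r : E2} (hvol : volume (_root_.hexHull p q r) = 1) :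
    Poinc (_root_.hexHull p q r) c := by
  have key : ∀ a b d : E2, _root_.hexHull a b d = _root_.hexHull p q r → 0 ≤ det2 a b →
      0 ≤ det2 b d → 0 ≤ det2 a d → Poinc (_root_.hexHull p q r) c := fun a b d h h1 h2 h3 =>
    h ▸ Poinc.hexHull_of_nonneg hs0 hs hc hP (h.symm ▸ hvol) h1 h2 h3
  have hset : ∀ a b d : E2, ({a, b, d, -a, -b, -d} : Set E2) = {p, q, r, -p, -q, -r} →
      _root_.hexHull a b d = _root_.hexHull p q r := fun a b d h => by
    simp only [_root_.hexHull, h]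
  rcases le_total 0 (det2 p q) with h1 | h1 <;> rcases le_total 0 (det2 q r) with h2 | h2 <;>
    rcases le_total 0 (det2 p r) with h3 | h3
  · exact key p q r rfl h1 h2 h3
  · refine key r (-q) p (hset _ _ _ (by ext; simp; tauto)) ?_ ?_ ?_ <;>
      simp only [det2, PiLp.neg_apply] at * <;> linarith
  · refine key p r q (hset _ _ _ (by ext; simp; tauto)) ?_ ?_ ?_ <;>
      simp only [det2] at * <;> linarith
  · refine key p q (-r) (hset _ _ _ (by ext; simp; tauto)) ?_ ?_ ?_ <;>
      simp only [det2, PiLp.neg_apply] at * <;> linarith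
  · refine key q p r (hset _ _ _ (by ext; simp; tauto)) ?_ ?_ ?_ <;>
      simp only [det2] at * <;> linarith
  · refine key (-p) q r (hset _ _ _ (by ext; simp; tauto)) ?_ ?_ ?_ <;>
      simp only [det2, PiLp.neg_apply] at * <;> linarith
  · refine key p (-q) r (hset _ _ _ (by ext; simp; tauto)) ?_ ?_ ?_ <;>
      simp only [det2, PiLp.neg_apply] at * <;> linarith
  · refine key r q p (hset _ _ _ (by ext; simp; tauto)) ?_ ?_ ?_ <;>
      simp only [det2] at * <;> linarith

lemma Poinc.of_hex {s c : ℝ} (hs0 : 0 < s) (hs : s ^ 2 = 4 / 3) (hc : 0 ≤ c)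
    (hP : Poinc (_root_.symHex √s (1 / 3)) c) {H : Set E2} (hH : Hex H) (hvol : volume H = 1) :
    Poinc H c := by
  obtain ⟨⟨x₀, p, q, r, rfl⟩, -⟩ := hH
  change volume ((fun y => x₀ + y) '' _root_.hexHull p q r) = 1 at hvol
  change Poinc ((fun y => x₀ + y) '' _root_.hexHull p q r) c
  rw [Set.image_add_left, measure_preimage_add] at hvol
  have := Poinc.of_similarity (E := (fun y => x₀ + y) '' _root_.hexHull p q r)
    (Poinc.hexHull hs0 hs hc hP hvol) (LinearIsometryEquiv.refl ℝ E2) one_pos x₀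
    (fun z hz => by simpa using hz)
  simpa using this

lemma hexVertex_mem (k : ℕ) (hk : k < 6) : hexVertex k ∈ stdHexagon :=
  subset_convexHull ℝ _ ⟨⟨k, hk⟩, rfl⟩

lemma hexVertex_eq (k : ℕ) :
    hexVertex k = toPlane (Real.cos (k * π / 3), Real.sin (k * π / 3)) := rfl

lemma hexVertex_coords :
    hexVertex 0 = toPlane (1, 0) ∧ hexVertex 1 = toPlane (1 / 2, √3 / 2) ∧
    hexVertex 2 = toPlane (-(1 / 2), √3 / 2) ∧ hexVertex 3 = toPlane (-1, 0) ∧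
    hexVertex 4 = toPlane (-(1 / 2), -(√3 / 2)) ∧ hexVertex 5 = toPlane (1 / 2, -(√3 / 2)) := by
  have e2 : (2 : ℕ) * π / 3 = π - π / 3 := by push_cast; ring
  have e3 : (3 : ℕ) * π / 3 = π := by push_cast; ring
  have e4 : (4 : ℕ) * π / 3 = π / 3 + π := by push_cast; ring
  have e5 : (5 : ℕ) * π / 3 = 2 * π - π / 3 := by push_cast; ring
  simp only [hexVertex_eq]
  rw [e2, e3, e4, e5]
  simp [Real.cos_pi_sub, Real.sin_pi_sub, Real.cos_add_pi, Real.sin_add_pi,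
    Real.cos_two_pi_sub, Real.sin_two_pi_sub]

lemma stdHexagon_eq :
    stdHexagon = {z : E2 | 2 * |z 1| ≤ √3 ∧ √3 * |z 0| + |z 1| ≤ √3} := by
  obtain ⟨v0, v1, v2, v3, v4, v5⟩ := hexVertex_coords
  have h3 : 0 < √3 := by positivity
  refine Subset.antisymm (convexHull_min ?_ ?_) ?_
  · rintro _ ⟨k, rfl⟩
    fin_cases k
    all_goals simp [v0, v1, v2, v3, v4, v5, abs_of_pos]
    all_goals constructor <;> linarith
  · rintro x ⟨h1, h2⟩ y ⟨h4, h5⟩ a b ha hb hab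
    have i0 : |(a • x + b • y) 0| ≤ a * |x 0| + b * |y 0| := by
      simpa [abs_mul, abs_of_nonneg ha, abs_of_nonneg hb] using abs_add_le (a * x 0) (b * y 0)
    have i1 : |(a • x + b • y) 1| ≤ a * |x 1| + b * |y 1| := by
      simpa [abs_mul, abs_of_nonneg ha, abs_of_nonneg hb] using abs_add_le (a * x 1) (b * y 1)
    have k1 := mul_le_mul_of_nonneg_left h1 ha
    have k2 := mul_le_mul_of_nonneg_left h2 ha
    have k4 := mul_le_mul_of_nonneg_left h4 hb
    have k5 := mul_le_mul_of_nonneg_left h5 hb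
    have k6 := mul_le_mul_of_nonneg_left i0 h3.le
    have e : a * √3 + b * √3 = √3 := by rw [← add_mul, hab, one_mul]
    exact ⟨by linarith, by linarith⟩
  · have hconv : Convex ℝ stdHexagon := convex_convexHull ℝ _
    have key : ∀ z : E2, ∀ ε : ℝ, 0 ≤ ε * z 1 → ε * ε = 1 → 2 * (ε * z 1) ≤ √3 →
        √3 * |z 0| + ε * z 1 ≤ √3 → toPlane (1 / 2, ε * (√3 / 2)) ∈ stdHexagon →
        toPlane (-(1 / 2), ε * (√3 / 2)) ∈ stdHexagon → z ∈ stdHexagon := by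
      intro z ε h0 hε h1 h2 m1 m2
      set t := 2 * (ε * z 1) / √3 with ht
      have ht0 : 0 ≤ t := by positivity
      have ht1 : t ≤ 1 := (div_le_one h3).2 h1
      have hm0 : toPlane (1, 0) ∈ stdHexagon := v0 ▸ hexVertex_mem 0 (by norm_num)
      have hm3 : toPlane (-1, 0) ∈ stdHexagon := v3 ▸ hexVertex_mem 3 (by norm_num)
      have ma := hconv hm0 m1 (sub_nonneg.2 ht1) ht0 (by ring)
      have mb := hconv hm3 m2 (sub_nonneg.2 ht1) ht0 (by ring)
      have htz : t * √3 = 2 * (ε * z 1) := by rw [ht]; field_simp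
      have hl : |z 0| ≤ 1 - t / 2 := by
        have : √3 * |z 0| ≤ √3 * (1 - t / 2) := by linarith
        exact le_of_mul_le_mul_left this h3
      have hlpos : 0 < 1 - t / 2 := by linarith
      rw [abs_le] at hl
      have hs : 0 ≤ (1 - t / 2 + z 0) / (2 * (1 - t / 2)) :=
        div_nonneg (by linarith) (by linarith)
      have hs' : 0 ≤ (1 - t / 2 - z 0) / (2 * (1 - t / 2)) :=
        div_nonneg (by linarith) (by linarith)
      have hss : (1 - t / 2 + z 0) / (2 * (1 - t / 2)) +
          (1 - t / 2 - z 0) / (2 * (1 - t / 2)) = 1 := by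
        rw [← add_div, div_eq_one_iff_eq (by positivity)]; ring
      have hsd : ((1 - t / 2 + z 0) / (2 * (1 - t / 2)) -
          (1 - t / 2 - z 0) / (2 * (1 - t / 2))) * (1 - t / 2) = z 0 := by
        rw [← sub_div, div_mul_eq_mul_div, div_eq_iff (by positivity)]; ring
      have hz := hconv ma mb hs hs' hss
      convert hz using 1
      ext i; fin_cases i
      · simp only [PiLp.add_apply, PiLp.smul_apply, Fin.zero_eta, toPlane_zero, smul_eq_mul]
        linear_combination -hsd
      · simp only [PiLp.add_apply, PiLp.smul_apply, Fin.mk_one, toPlane_one, smul_eq_mul]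
        linear_combination (-z 1) * hε - (ε / 2) * htz - (t * (ε * (√3 / 2))) * hss
    rintro z ⟨h1, h2⟩
    rcases le_total 0 (z 1) with h | h
    · rw [abs_of_nonneg h] at h1 h2
      refine key z 1 (by linarith) (by norm_num) (by linarith) (by linarith) ?_ ?_
      · rw [one_mul, ← v1]; exact hexVertex_mem 1 (by norm_num)
      · rw [one_mul, ← v2]; exact hexVertex_mem 2 (by norm_num)
    · rw [abs_of_nonpos h] at h1 h2
      refine key z (-1) (by linarith) (by norm_num) (by linarith) (by linarith) ?_ ?_
      · rw [neg_one_mul, ← v5]; exact hexVertex_mem 5 (by norm_num)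
      · rw [neg_one_mul, ← v4]; exact hexVertex_mem 4 (by norm_num)

lemma measurableSet_stdHexagon : MeasurableSet stdHexagon :=
  ((Set.toFinite _).isCompact_convexHull ℝ).measurableSet

lemma volume_stdHexagon_le : volume stdHexagon ≤ ENNReal.ofReal (3 * √3 / 2) := by
  have h3 : 0 < √3 := by positivity
  have hfib : ∀ y : ℝ, volume ((fun x : ℝ => (x, y)) ⁻¹' (toPlane ⁻¹' stdHexagon)) ≤
      (Icc (-(√3 / 2)) (√3 / 2)).indicator
        (fun y => ENNReal.ofReal (2 - 2 / √3 * |y|)) y := by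
    intro y
    by_cases hy : y ∈ Icc (-(√3 / 2)) (√3 / 2)
    · rw [Set.indicator_of_mem hy]
      have : ((fun x : ℝ => (x, y)) ⁻¹' (toPlane ⁻¹' stdHexagon)) ⊆
          Icc (-(1 - |y| / √3)) (1 - |y| / √3) := by
        intro x hx
        rw [stdHexagon_eq] at hx
        have h := hx.2
        simp only [toPlane_zero, toPlane_one] at h
        rw [mem_Icc, ← abs_le]
        refine le_of_mul_le_mul_left ?_ h3
        rw [mul_sub, mul_div_cancel₀ _ h3.ne']
        linarith
      refine (measure_mono this).trans (le_of_eq ?_)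
      rw [Real.volume_Icc]; congr 1; ring
    · rw [Set.indicator_of_notMem hy, nonpos_iff_eq_zero]
      convert measure_empty (μ := (volume : Measure ℝ)) using 2
      refine Set.eq_empty_of_forall_notMem fun x hx => hy ?_
      rw [stdHexagon_eq] at hx
      have h := hx.1
      simp only [toPlane_one] at h
      rw [mem_Icc, ← abs_le]; linarith
  have hintg : ∫ y in (-(√3 / 2))..(√3 / 2), (2 - 2 / √3 * |y|) = 3 * √3 / 2 := by
    have hc : Continuous fun y : ℝ => 2 - 2 / √3 * |y| := by fun_prop
    rw [← intervalIntegral.integral_add_adjacent_intervals (b := 0)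
      (hc.intervalIntegrable _ _) (hc.intervalIntegrable _ _)]
    have i1 : ∫ y in (-(√3 / 2))..0, (2 - 2 / √3 * |y|) =
        ∫ y in (-(√3 / 2))..0, (2 + 2 / √3 * y) := by
      refine intervalIntegral.integral_congr fun y hy => ?_
      rw [uIcc_of_le (by linarith)] at hy
      simp only [abs_of_nonpos hy.2]; ring
    have i2 : ∫ y in 0..(√3 / 2), (2 - 2 / √3 * |y|) = ∫ y in 0..(√3 / 2), (2 - 2 / √3 * y) := by
      refine intervalIntegral.integral_congr fun y hy => ?_
      rw [uIcc_of_le (by linarith)] at hy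
      simp only [abs_of_nonneg hy.1]
    rw [i1, i2, intervalIntegral.integral_add (by simp)
      (Continuous.intervalIntegrable (by fun_prop) _ _), intervalIntegral.integral_sub (by simp) (Continuous.intervalIntegrable (by fun_prop) _ _)]
    rw [intervalIntegral.integral_const_mul, intervalIntegral.integral_const_mul, integral_id,
      integral_id, intervalIntegral.integral_const, intervalIntegral.integral_const, smul_eq_mul,
      smul_eq_mul]
    field_simp; ring
  rw [← measurePreserving_toPlane.measure_preimage measurableSet_stdHexagon.nullMeasurableSet,
    Measure.volume_eq_prod,
    Measure.prod_apply_symm (toPlane.continuous.measurable measurableSet_stdHexagon)]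
  refine (lintegral_mono hfib).trans ?_
  rw [lintegral_indicator measurableSet_Icc, ← hintg,
    intervalIntegral.integral_of_le (by linarith), ← integral_Icc_eq_integral_Ioc,
    ofReal_integral_eq_lintegral_ofReal
      (Continuous.integrableOn_Icc (by fun_prop))]
  refine (ae_restrict_iff' measurableSet_Icc).2 (Eventually.of_forall fun y hy => ?_)
  have : 2 / √3 * |y| ≤ 2 / √3 * (√3 / 2) := by
    have := abs_le.2 hy
    gcongr
  have e : 2 / √3 * (√3 / 2) = 1 := by field_simp
  simp only [Pi.zero_apply]
  linarith

lemma IsSimilarity.exists_eq {f : E2 → E2} (hf : IsSimilarity f) :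
    ∃ (s : ℝ) (B : E2 ≃ₗᵢ[ℝ] E2), 0 < s ∧ ∀ x, f x = f 0 + s • B x := by
  obtain ⟨s, hs, h⟩ := hf
  have hg : Isometry fun x => s⁻¹ • (f x - f 0) := Isometry.of_dist_eq fun x y => by
    rw [dist_smul₀, dist_sub_right, h, Real.norm_eq_abs, abs_of_pos (inv_pos.2 hs),
      inv_mul_cancel_left₀ hs.ne']
  set A := hg.affineIsometryOfStrictConvexSpace
  refine ⟨s, A.linearIsometry.toLinearIsometryEquiv rfl, hs, fun x => ?_⟩
  have hA : A.linearIsometry x = A x - A 0 := by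
    have := A.map_vsub x 0
    simpa using this
  have hA' : ∀ x, A x = s⁻¹ • (f x - f 0) := fun x => rfl
  rw [LinearIsometry.coe_toLinearIsometryEquiv, hA, hA', hA', sub_self, smul_zero, sub_zero,
    smul_inv_smul₀ hs.ne', add_sub_cancel]

lemma volume_image_similarity (B : E2 ≃ₗᵢ[ℝ] E2) {s : ℝ} (hs : 0 < s) (x₁ : E2) (S : Set E2)
    (hS : MeasurableSet S) :
    volume ((fun x => x₁ + s • B x) '' S) = ENNReal.ofReal (s ^ 2) * volume S := by
  have : (fun x => x₁ + s • B x) '' S = (fun y => x₁ + y) '' ((fun y => s • y) '' (B '' S)) := by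
    simp only [Set.image_image]
  rw [this, Set.image_add_left, measure_preimage_add, Set.image_smul, Measure.addHaar_smul,
    finrank_euclideanSpace_fin, abs_of_pos (by positivity)]
  congr 1
  have hm : MeasurableSet (B '' S) := B.toHomeomorph.measurableEmbedding.measurableSet_image' hS
  rw [← B.measurePreserving.measure_preimage hm.nullMeasurableSet,
    Set.preimage_image_eq _ B.injective]

lemma Poinc.symHex_of_isRegularHexagon {Hs : Set E2} (hreg : IsRegularHexagon Hs)
    (hvol : volume Hs = 1) {c S : ℝ} (hS0 : 0 < S) (hS : S ^ 2 = 4 / 3) (hP : Poinc Hs c) :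
    Poinc (_root_.symHex √S (1 / 3)) c := by
  obtain ⟨f, hf, rfl⟩ := hreg
  obtain ⟨s, B, hs, hfB⟩ := hf.exists_eq
  have h3 : 0 < √3 := by positivity
  have h33 : √3 ^ 2 = 3 := Real.sq_sqrt (by norm_num)
  have hS3 : √3 * S = 2 := by
    have : (√3 * S) ^ 2 = 2 ^ 2 := by rw [mul_pow, h33, hS]; norm_num
    exact (pow_left_inj₀ (by positivity) (by norm_num) two_ne_zero).1 this
  have hsvol : 1 ≤ s ^ 2 * (3 * √3 / 2) := by
    rw [funext hfB, volume_image_similarity B hs _ _ measurableSet_stdHexagon] at hvol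
    have := mul_le_mul_right (volume_stdHexagon_le) (ENNReal.ofReal (s ^ 2))
    rwa [hvol, ← ENNReal.ofReal_mul (by positivity), ENNReal.one_le_ofReal] at this
  have hw : √S ≤ √3 * s := by
    refine Real.sqrt_le_iff.2 ⟨by positivity, ?_⟩
    rw [mul_pow, h33]
    nlinarith
  have hB : ∀ z, -(B.symm.trans (rotPlane 0 1 (by norm_num))) (f 0) +
      (1 : ℝ) • (B.symm.trans (rotPlane 0 1 (by norm_num))) z ∈ _root_.symHex √S (1 / 3) →
      z ∈ f '' stdHexagon := by
    intro z hz
    rw [one_smul, neg_add_eq_sub, ← map_sub, LinearIsometryEquiv.trans_apply] at hz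
    set y := B.symm (z - f 0) with hy
    obtain ⟨h1, h2⟩ := hz
    simp only [rotPlane_zero, rotPlane_one] at h1 h2
    rw [Real.sq_sqrt hS0.le] at h2
    simp at h1 h2
    refine ⟨s⁻¹ • y, ?_, ?_⟩
    · rw [stdHexagon_eq]
      have e : ∀ i, |(s⁻¹ • y) i| = |y i| / s := fun i => by
        rw [PiLp.smul_apply, smul_eq_mul, abs_mul, abs_inv, abs_of_pos hs]; ring
      refine ⟨?_, ?_⟩
      · rw [e, ← mul_div_assoc, div_le_iff₀ hs]; linarith
      · rw [e, e, ← mul_div_assoc, ← add_div, div_le_iff₀ hs]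
        refine le_trans ?_ hw
        have : √3 = 3 / 2 * S := by nlinarith
        rw [this]; linarith
    · rw [hfB, map_smul, smul_inv_smul₀ hs.ne', hy, LinearIsometryEquiv.apply_symm_apply,
        add_sub_cancel]
  simpa using hP.of_similarity _ one_pos _ hB

/-- Among convex polygons of unit area tiling the plane by translations,
the regular hexagon minimizes the first Dirichlet Laplacian eigenvalue. -/
theorem statement15 (Hstar : Set E2) (hreg : IsRegularHexagon Hstar)
    (hvolstar : volume Hstar = 1) :
    ∀ H : Set E2, Hex H → volume H = 1 →
      dirichletEigenvalue Hstar ≤ dirichletEigenvalue H := by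
  intro H hH hvol
  have hs : √(4 / 3) ^ 2 = 4 / 3 := Real.sq_sqrt (by norm_num)
  have hs0 : 0 < √(4 / 3) := by positivity
  exact (Poinc.of_hex hs0 hs (dirichletEigenvalue_nonneg Hstar)
    (Poinc.symHex_of_isRegularHexagon hreg hvolstar hs0 hs (poinc_dirichletEigenvalue Hstar))
    hH hvol).le_dirichletEigenvalue hH.2
end
end

section
/- Let E ⊆ ℝ² be a compact convex set with nonempty interior and let π ⊆ ℝ² be an affine line. Then the Steiner symmetrization S_π(E) is again a compact convex set with nonempty interior, and its Lebesgue measure satisfies |S_π(E)| = |E|. -/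
open MeasureTheory Metric Filter Real Set
open scoped Topology ENNReal NNReal RealInnerProductSpace

noncomputable section

lemma Convex.exists_eq_Icc_of_isCompact {I : Set ℝ} (hI : Convex ℝ I) (hc : IsCompact I)
    (hne : I.Nonempty) : ∃ a b : ℝ, a ≤ b ∧ I = Icc a b := by
  have h := eq_Icc_of_connected_compact ⟨hne, hI.isPreconnected⟩ hc
  refine ⟨sInf I, sSup I, ?_, h⟩
  rw [h] at hne
  exact nonempty_Icc.mp hne

lemma isometry_add_smul_of_norm_eq_one {v : E2} (hv : ‖v‖ = 1) (x : E2) :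
    Isometry fun t : ℝ => x + t • v := by
  refine Isometry.of_dist_eq fun s t => ?_
  rw [dist_add_left, dist_eq_norm, ← sub_smul, norm_smul, hv, mul_one, Real.dist_eq,
    Real.norm_eq_abs]

lemma hausdorffMeasure_inter_lineThrough {v : E2} (hv : ‖v‖ = 1) (x : E2) (A : Set E2) :
    μH[1] (A ∩ lineThrough x v) = volume {t : ℝ | x + t • v ∈ A} := by
  have h : A ∩ lineThrough x v = (fun t : ℝ => x + t • v) '' {t : ℝ | x + t • v ∈ A} := by
    ext y
    constructor
    · rintro ⟨hy, t, rfl⟩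
      exact ⟨t, hy, rfl⟩
    · rintro ⟨t, ht, rfl⟩
      exact ⟨ht, t, rfl⟩
  rw [h, (isometry_add_smul_of_norm_eq_one hv x).hausdorffMeasure_image (Or.inl zero_le_one),
    hausdorffMeasure_real]

lemma inter_lineThrough_nonempty_iff {x v : E2} {A : Set E2} :
    (A ∩ lineThrough x v).Nonempty ↔ {t : ℝ | x + t • v ∈ A}.Nonempty := by
  constructor
  · rintro ⟨_, hy, t, rfl⟩
    exact ⟨t, hy⟩
  · rintro ⟨t, ht⟩
    exact ⟨_, ht, t, rfl⟩

lemma exists_slice_eq_Icc {A : Set E2} (hcomp : IsCompact A) (hconv : Convex ℝ A) {v : E2}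
    (hv : ‖v‖ = 1) (x : E2) (hne : {t : ℝ | x + t • v ∈ A}.Nonempty) :
    ∃ a b : ℝ, a ≤ b ∧ {t : ℝ | x + t • v ∈ A} = Icc a b := by
  refine Convex.exists_eq_Icc_of_isCompact ?_ ?_ hne
  · intro s hs t ht a b ha hb hab
    have h := hconv hs ht ha hb hab
    have e : a • (x + s • v) + b • (x + t • v) = x + (a • s + b • t) • v := by
      obtain rfl : a = 1 - b := by linarith
      simp only [smul_eq_mul]
      module
    rwa [e] at h
  · exact (isometry_add_smul_of_norm_eq_one hv x).isClosedEmbedding.isCompact_preimage hcomp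

/-- The points `x + t • v` of the symmetrization are those for which `t` is half of a difference
of two elements of the slice of `A` over `x`. -/
lemma mem_steiner_iff {A : Set E2} (hcomp : IsCompact A) (hconv : Convex ℝ A) {v : E2}
    (hv : ‖v‖ = 1) {c : ℝ} {y : E2} :
    y ∈ steiner v c A ↔ ∃ x : E2, ⟪x, v⟫ = c ∧ ∃ s t : ℝ, x + s • v ∈ A ∧ x + t • v ∈ A ∧
      y = x + ((s - t) / 2) • v := by
  have key : ∀ (x : E2) (r : ℝ), ((A ∩ lineThrough x v).Nonempty ∧
      ENNReal.ofReal (2 * |r|) ≤ μH[1] (A ∩ lineThrough x v)) ↔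
      ∃ s t : ℝ, x + s • v ∈ A ∧ x + t • v ∈ A ∧ r = (s - t) / 2 := by
    intro x r
    rw [inter_lineThrough_nonempty_iff, hausdorffMeasure_inter_lineThrough hv]
    constructor
    · rintro ⟨hne, hr⟩
      obtain ⟨a, b, hab, h⟩ := exists_slice_eq_Icc hcomp hconv hv x hne
      rw [h, Real.volume_Icc, ENNReal.ofReal_le_ofReal_iff (by linarith)] at hr
      have hmem : ∀ t, t ∈ Icc a b → x + t • v ∈ A := fun t ht => by
        rw [← h] at ht
        exact ht
      have := le_abs_self r
      have := neg_abs_le r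
      refine ⟨(a + b) / 2 + r, (a + b) / 2 - r, hmem _ ?_, hmem _ ?_, by ring⟩ <;>
        constructor <;> linarith
    · rintro ⟨s, t, hs, ht, rfl⟩
      have hne : {t : ℝ | x + t • v ∈ A}.Nonempty := ⟨s, hs⟩
      obtain ⟨a, b, hab, h⟩ := exists_slice_eq_Icc hcomp hconv hv x hne
      refine ⟨hne, ?_⟩
      have hs' : s ∈ Icc a b := h ▸ hs
      have ht' : t ∈ Icc a b := h ▸ ht
      rw [h, Real.volume_Icc]
      refine ENNReal.ofReal_le_ofReal ?_
      rw [abs_div, abs_two, mul_div_cancel₀ _ two_ne_zero, abs_le]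
      constructor <;> linarith [hs'.1, hs'.2, ht'.1, ht'.2]
  constructor
  · rintro ⟨x, hx, hne, r, rfl, hr⟩
    obtain ⟨s, t, hs, ht, rfl⟩ := (key x r).1 ⟨hne, hr⟩
    exact ⟨x, hx, s, t, hs, ht, rfl⟩
  · rintro ⟨x, hx, s, t, hs, ht, rfl⟩
    obtain ⟨hne, hr⟩ := (key x _).2 ⟨s, t, hs, ht, rfl⟩
    exact ⟨x, hx, hne, _, rfl, hr⟩

lemma convex_steiner {A : Set E2} (hcomp : IsCompact A) (hconv : Convex ℝ A) {v : E2}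
    (hv : ‖v‖ = 1) (c : ℝ) : Convex ℝ (steiner v c A) := by
  intro y hy z hz a b ha hb hab
  rw [mem_steiner_iff hcomp hconv hv] at hy hz ⊢
  obtain ⟨x, hx, s, t, hs, ht, rfl⟩ := hy
  obtain ⟨x', hx', s', t', hs', ht', rfl⟩ := hz
  refine ⟨a • x + b • x', ?_, a * s + b * s', a * t + b * t', ?_, ?_, ?_⟩
  · rw [inner_add_left, real_inner_smul_left, real_inner_smul_left, hx, hx', ← add_mul, hab,
      one_mul]
  · convert hconv hs hs' ha hb hab using 1
    module
  · convert hconv ht ht' ha hb hab using 1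
    module
  · module

lemma isCompact_steiner {A : Set E2} (hcomp : IsCompact A) (hconv : Convex ℝ A) {v : E2}
    (hv : ‖v‖ = 1) (c : ℝ) : IsCompact (steiner v c A) := by
  have hvv : ⟪v, v⟫ = 1 := by rw [real_inner_self_eq_norm_sq, hv, one_pow]
  let F : Set (E2 × E2) := (A ×ˢ A) ∩ {p | p.1 - ⟪p.1, v⟫ • v = p.2 - ⟪p.2, v⟫ • v}
  let f : E2 × E2 → E2 := fun p =>
    (p.1 + (c - ⟪p.1, v⟫) • v) + ((⟪p.1, v⟫ - ⟪p.2, v⟫) / 2) • v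
  have hF : IsCompact F :=
    (hcomp.prod hcomp).inter_right (isClosed_eq (by fun_prop) (by fun_prop))
  have hf : Continuous f := by fun_prop
  convert hF.image hf using 1
  ext y
  rw [mem_steiner_iff hcomp hconv hv]
  constructor
  · rintro ⟨x, hx, s, t, hs, ht, rfl⟩
    have hin : ∀ r : ℝ, ⟪x + r • v, v⟫ = c + r := fun r => by
      rw [inner_add_left, real_inner_smul_left, hvv, hx, mul_one]
    refine ⟨(x + s • v, x + t • v), ⟨⟨hs, ht⟩, ?_⟩, ?_⟩
    · simp only [mem_ofPred_eq, hin]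
      module
    · simp only [f, hin]
      module
  · rintro ⟨⟨p, q⟩, ⟨⟨hp, hq⟩, hpq⟩, rfl⟩
    simp only [mem_ofPred_eq] at hp hq hpq
    refine ⟨p + (c - ⟪p, v⟫) • v, ?_, ⟪p, v⟫ - c, ⟪q, v⟫ - c, ?_, ?_, ?_⟩
    · rw [inner_add_left, real_inner_smul_left, hvv]
      ring
    · convert hp using 1
      module
    · convert hq using 1
      rw [sub_eq_iff_eq_add] at hpq
      nth_rewrite 1 [hpq]
      module
    · simp only [f]
      module

lemma volume_slice_steiner {A : Set E2} (hcomp : IsCompact A) (hconv : Convex ℝ A) {v : E2}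
    (hv : ‖v‖ = 1) (c : ℝ) {x : E2} (hx : ⟪x, v⟫ = 0) :
    volume {t : ℝ | x + t • v ∈ steiner v c A} = volume {t : ℝ | x + t • v ∈ A} := by
  have hvv : ⟪v, v⟫ = 1 := by rw [real_inner_self_eq_norm_sq, hv, one_pow]
  have hmem : ∀ r : ℝ, x + r • v ∈ steiner v c A ↔
      ∃ s t : ℝ, x + s • v ∈ A ∧ x + t • v ∈ A ∧ r = c + (s - t) / 2 := by
    intro r
    rw [mem_steiner_iff hcomp hconv hv]
    constructor
    · rintro ⟨z, hz, s, t, hs, ht, h⟩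
      have hr : r = c + (s - t) / 2 := by
        have := congrArg (fun y => ⟪y, v⟫) h
        simpa [inner_add_left, real_inner_smul_left, hv, hx, hz] using this
      have hzx : z = x + c • v := by
        rw [hr] at h
        rw [← sub_eq_zero] at h ⊢
        rw [← neg_eq_zero, ← h]
        module
      subst hzx
      refine ⟨c + s, c + t, ?_, ?_, by rw [hr]; ring⟩
      · rwa [add_smul, ← add_assoc]
      · rwa [add_smul, ← add_assoc]
    · rintro ⟨s, t, hs, ht, rfl⟩
      refine ⟨x + c • v, ?_, s - c, t - c, ?_, ?_, by module⟩
      · rw [inner_add_left, real_inner_smul_left, hvv, hx, mul_one, zero_add]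
      · convert hs using 1
        module
      · convert ht using 1
        module
  rcases {t : ℝ | x + t • v ∈ A}.eq_empty_or_nonempty with he | hne
  · rw [he]
    congr 1
    rw [eq_empty_iff_forall_notMem]
    rintro r hr
    obtain ⟨s, -, hs, -⟩ := (hmem r).1 hr
    exact eq_empty_iff_forall_notMem.1 he s hs
  · obtain ⟨a, b, hab, h⟩ := exists_slice_eq_Icc hcomp hconv hv x hne
    have hI : ∀ t, x + t • v ∈ A ↔ t ∈ Icc a b := fun t => by rw [← h]; rfl
    have hS : {t : ℝ | x + t • v ∈ steiner v c A} = Icc (c - (b - a) / 2) (c + (b - a) / 2) := by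
      ext r
      simp only [mem_ofPred_eq, hmem, hI]
      constructor
      · rintro ⟨s, t, hs, ht, rfl⟩
        constructor <;> linarith [hs.1, hs.2, ht.1, ht.2]
      · rintro ⟨h1, h2⟩
        refine ⟨(a + b) / 2 + (r - c), (a + b) / 2 - (r - c), ⟨?_, ?_⟩, ⟨?_, ?_⟩, by ring⟩ <;>
          linarith
    rw [hS, h, Real.volume_Icc, Real.volume_Icc]
    congr 1
    ring

/-- Cavalieri's principle for the slices of plane sets in a fixed direction. -/
lemma volume_eq_of_volume_slice_eq {v : E2} (hv : ‖v‖ = 1) {A B : Set E2}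
    (hA : MeasurableSet A) (hB : MeasurableSet B)
    (h : ∀ x : E2, ⟪x, v⟫ = 0 →
      volume {t : ℝ | x + t • v ∈ A} = volume {t : ℝ | x + t • v ∈ B}) :
    volume A = volume B := by
  have hon : Orthonormal ℝ (({1} : Set (Fin 2)).domRestrict fun _ => v) :=
    ⟨fun _ => hv, fun i j hij => (hij (Subsingleton.elim i j)).elim⟩
  obtain ⟨b, hb⟩ := hon.exists_orthonormalBasis_extension_of_card_eq (by simp)
  have hb1 : b 1 = v := hb 1 rfl
  have hb0 : ⟪b 0, v⟫ = 0 := hb1 ▸ b.orthonormal.2 (by decide)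
  let e : ℝ × ℝ ≃ᵐ E2 := (MeasurableEquiv.finTwoArrow.symm.trans
    (MeasurableEquiv.toLp 2 (Fin 2 → ℝ))).trans b.measurableEquiv.symm
  have he : MeasurePreserving e := by
    exact ((volume_preserving_finTwoArrow ℝ).symm.trans
      (PiLp.volume_preserving_toLp (Fin 2))).trans b.measurePreserving_measurableEquiv.symm
  have he' : ∀ s t : ℝ, e (s, t) = s • b 0 + t • v := by
    intro s t
    change b.repr.symm (WithLp.toLp 2 ![s, t]) = _
    rw [← b.sum_repr_symm]
    simp [Fin.sum_univ_two, hb1]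
  rw [← he.measure_preimage hA.nullMeasurableSet, ← he.measure_preimage hB.nullMeasurableSet,
    Measure.volume_eq_prod, Measure.prod_apply (e.measurable hA),
    Measure.prod_apply (e.measurable hB)]
  refine lintegral_congr fun s => ?_
  have := h (s • b 0) (by rw [real_inner_smul_left, hb0, mul_zero])
  simpa only [preimage, mem_ofPred_eq, he'] using this

lemma Convex.interior_nonempty_of_volume_ne_zero {A : Set E2} (hA : Convex ℝ A)
    (h : volume A ≠ 0) : (interior A).Nonempty := by
  rw [nonempty_iff_ne_empty]
  intro he
  refine h (measure_mono_null ?_ (hA.addHaar_frontier volume))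
  rw [frontier, he, sdiff_empty]
  exact subset_closure

/-- The Steiner symmetrization of a compact convex planar set with
nonempty interior is again a compact convex set with nonempty interior, of the same
Lebesgue measure. -/
theorem statement16 (E : Set E2) (hcomp : IsCompact E) (hconv : Convex ℝ E)
    (hint : (interior E).Nonempty) (v : E2) (hv : ‖v‖ = 1) (c : ℝ) :
    IsCompact (steiner v c E) ∧ Convex ℝ (steiner v c E) ∧
    (interior (steiner v c E)).Nonempty ∧ volume (steiner v c E) = volume E := by
  have hc := isCompact_steiner hcomp hconv hv c
  have hconv' := convex_steiner hcomp hconv hv c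
  have hvol : volume (steiner v c E) = volume E :=
    volume_eq_of_volume_slice_eq hv hc.measurableSet hcomp.measurableSet
      fun x hx => volume_slice_steiner hcomp hconv hv c hx
  refine ⟨hc, hconv', hconv'.interior_nonempty_of_volume_ne_zero ?_, hvol⟩
  rw [hvol]
  exact (Measure.measure_pos_of_nonempty_interior volume hint).ne'
end
end
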